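/- arXiv:2311.00992 — 4 statements merged into one kernel-verified Lean document; each statement's English description precedes it below -/
import Mathlib

section
/- For any positive integer n with n ∉ {1, 3}, there exists a Latin square of order n that has no orthogonal mate, i.e., there is no Latin square of order n orthogonal to it. -/
/-- A Latin square of order `n`: each symbol occurs exactly once in each row
and exactly once in each column. -/
def IsLatinSquare {n : ℕ} (A : Fin n → Fin n → Fin n) : Prop :=
  (∀ i, Function.Bijective fun j => A i j) ∧ (∀ j, Function.Bijective fun i => A i j)

/-- Two Latin squares are orthogonal: every ordered pair of symbols occurs
exactly once among the superimposed pairs. -/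
def IsOrthogonal {n : ℕ} (A B : Fin n → Fin n → Fin n) : Prop :=
  ∀ p : Fin n × Fin n, ∃! q : Fin n × Fin n, (A q.1 q.2, B q.1 q.2) = p

/-!
If `A` has an orthogonal mate `B`, the cells where `B` has a given symbol form a transversal of `A`;
hence every cell of `A` lies on a transversal. Identify `Fin n` with `ℤ/n`. Summing
`A i j - (i + j)` over the cells `(i, j)` of a transversal gives `-∑ x`, which is zero exactly
when `n` is odd. For even `n` the cyclic square therefore has no transversal at all. For odd `n`,
let `2h = 1`, and permute the entries of the cyclic square in rows `0`, `h` and `1`, column by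
column, so that the cells `(h, 0)` and `(1, -h)` receive `0`. A transversal through `(h, 0)` avoids
`(1, -h)` and has deviation `-h` in row `h`, `0` or `1` in row `0`, `0` or `-1` in row `1` and `0`
elsewhere. So `h ∈ {-1, 0, 1}`, which forces `3 = 0` in `ℤ/n`.
-/

open Equiv Function
open scoped Fin.CommRing

/-- The cells `(i, t i)` form a transversal of the array `A`: they meet each row, each column and
each symbol exactly once. -/
def IsTransversal {α β γ : Type*} (A : α → β → γ) (t : α → β) : Prop :=
  Bijective t ∧ Bijective fun i => A i (t i)

theorem IsOrthogonal.exists_isTransversal {n : ℕ} {A B : Fin n → Fin n → Fin n}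
    (hAB : IsOrthogonal A B) (hB : IsLatinSquare B) (r c : Fin n) :
    ∃ t, IsTransversal A t ∧ t r = c := by
  choose t ht using fun i => (hB.1 i).surjective (B r c)
  have t_injective : Injective t := fun i j hij =>
    (hB.2 (t i)).injective (by simpa only [hij] using (ht i).trans (ht j).symm)
  have symbol_injective : Injective fun i => A i (t i) := fun i j hij =>
    congrArg Prod.fst <| (hAB (A j (t j), B r c)).unique (y₁ := (i, t i)) (y₂ := (j, t j))
      (Prod.ext hij (ht i)) (Prod.ext rfl (ht j))
  exact ⟨t, ⟨t_injective.bijective_of_finite, symbol_injective.bijective_of_finite⟩,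
    (hB.1 r).injective (ht r)⟩

theorem isLatinSquare_of_forall_ne_injective {n : ℕ} {A : Fin n → Fin n → Fin n} (r : Fin n)
    (hcol : ∀ j, Bijective fun i => A i j) (hrow : ∀ i ≠ r, Injective (A i)) :
    IsLatinSquare A := by
  have row_surjective : Surjective (A r) := by
    intro s
    choose f hf using fun j => (hcol j).surjective s
    by_contra! hs
    have f_ne (j : Fin n) : f j ≠ r := fun h => hs j (h ▸ hf j)
    have f_injective : Injective f := fun j j' h =>
      hrow (f j) (f_ne j) ((hf j).trans (h ▸ (hf j').symm))
    obtain ⟨j, hj⟩ := f_injective.bijective_of_finite.surjective r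
    exact f_ne j hj
  refine ⟨fun i => ?_, hcol⟩
  obtain rfl | hi := eq_or_ne i r
  · exact row_surjective.bijective_of_finite
  · exact (hrow i hi).bijective_of_finite

section AddCommGroup

variable {G : Type*} [AddCommGroup G] [Fintype G]

theorem IsTransversal.sum_sub_add {A : G → G → G} {t : G → G} (ht : IsTransversal A t) :
    ∑ i, (A i (t i) - (i + t i)) = -∑ x : G, x := by
  rw [Finset.sum_sub_distrib, Finset.sum_add_distrib, ht.1.sum_comp fun x => x,
    ht.2.sum_comp fun x => x]
  abel

theorem IsTransversal.sum_eq_zero_of_add {t : G → G} (ht : IsTransversal (· + ·) t) :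
    ∑ x : G, x = 0 := by
  simpa using ht.sum_sub_add

end AddCommGroup

theorem ne_one_of_add_self_eq_one {R : Type*} [AddGroupWithOne R] {h : R}
    (h0 : h ≠ 0) (hh : h + h = 1) : h ≠ 1 :=
  fun h1 => h0 (add_eq_left.1 (hh.trans h1.symm))

theorem sum_eq_zero_of_add_self_eq_one {R : Type*} [NonAssocRing R] [Fintype R] {h : R}
    (hh : h + h = 1) : ∑ x : R, x = 0 := by
  have sum_neg : -∑ x : R, x = ∑ x : R, x := by
    rw [← Finset.sum_neg_distrib]
    exact Equiv.sum_comp (Equiv.neg R) fun x => x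
  calc ∑ x : R, x = (h + h) * ∑ x : R, x := by rw [hh, one_mul]
    _ = h * (∑ x : R, x + -∑ x : R, x) := by rw [sum_neg, add_mul, mul_add]
    _ = 0 := by rw [add_neg_cancel, mul_zero]

section Fin

variable {n : ℕ} [NeZero n]

theorem isLatinSquare_add : IsLatinSquare fun i j : Fin n => i + j :=
  ⟨fun i => (Equiv.addLeft i).bijective, fun j => (Equiv.addRight j).bijective⟩

theorem sum_fin_ne_zero_of_even (hn : Even n) : ∑ x : Fin n, x ≠ 0 := by
  have sum_eq_cast : ∑ x : Fin n, x = ((∑ i ∈ Finset.range n, i : ℕ) : Fin n) := by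
    rw [← Fin.sum_univ_eq_sum_range fun i => i, Nat.cast_sum]
    simp only [Fin.cast_val_eq_self]
  rw [sum_eq_cast, Ne, Fin.natCast_eq_zero]
  rintro ⟨c, hc⟩
  have gauss := Finset.sum_range_id_mul_two n
  rw [hc, mul_assoc] at gauss
  have pred_eq : c * 2 = n - 1 := Nat.eq_of_mul_eq_mul_left (NeZero.pos n) gauss
  obtain ⟨k, rfl⟩ := hn
  have := NeZero.pos (k + k)
  omega

theorem exists_fin_add_self_eq_one_of_odd (hn : Odd n) : ∃ h : Fin n, h + h = 1 := by
  obtain ⟨k, rfl⟩ := hn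
  refine ⟨(k + 1 : ℕ), ?_⟩
  have : ((2 * k + 1 : ℕ) : Fin (2 * k + 1)) = 0 := Fin.natCast_self _
  push_cast at this ⊢
  linear_combination this

/-- The rearrangement of column `j` of the cyclic square: column `0` puts the symbol `0` into row
`h`, and the other columns are permuted so that the rows stay Latin when `h + h = 1`. The order on
`Fin n` is that of the representatives `0, …, n - 1`. -/
def columnPerm (h j : Fin n) : Perm (Fin n) :=
  if j = 0 then swap 0 h else if j = -h then swap h 1 else if -h < j then swap 0 1 else 1

/-- The square obtained from the cyclic one by applying `columnPerm h j` to the rows of each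
column `j`. -/
def switchedSquare (h i j : Fin n) : Fin n := columnPerm h j i + j

variable {h : Fin n}

theorem columnPerm_of_ne {i : Fin n} (h0 : i ≠ 0) (h1 : i ≠ 1) (hh : i ≠ h) (j : Fin n) :
    columnPerm h j i = i := by
  unfold columnPerm
  split_ifs <;> simp [swap_apply_of_ne_of_ne, *]

theorem columnPerm_zero_eq_or {j : Fin n} (h0 : h ≠ 0) (hj : j ≠ 0) :
    columnPerm h j 0 = 0 ∨ columnPerm h j 0 = 1 := by
  have := nontrivial_of_ne h 0 h0
  rw [columnPerm, if_neg hj]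
  split_ifs <;> simp [swap_apply_of_ne_of_ne, h0.symm]

theorem columnPerm_one_eq_or {j : Fin n} (hj : j ≠ 0) (hjh : j ≠ -h) :
    columnPerm h j 1 = 1 ∨ columnPerm h j 1 = 0 := by
  rw [columnPerm, if_neg hj, if_neg hjh]
  split_ifs <;> simp

theorem switchedSquare_one (h0 : h ≠ 0) (h1 : h ≠ 1) :
    switchedSquare h 1 = Fin.cycleRange (-h) := by
  have := nontrivial_of_ne h 0 h0
  ext1 j
  unfold switchedSquare columnPerm
  obtain hj | rfl | hj := lt_trichotomy j (-h)
  · obtain rfl | hj0 := eq_or_ne j 0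
    · rw [if_pos rfl, swap_apply_of_ne_of_ne one_ne_zero h1.symm, Fin.cycleRange_of_lt hj, add_comm]
    · rw [if_neg hj0, if_neg hj.ne, if_neg hj.not_gt, Perm.one_apply, add_comm,
        Fin.cycleRange_of_lt hj]
  · rw [if_neg (neg_ne_zero.2 h0), if_pos rfl, swap_apply_right, add_neg_cancel,
      Fin.cycleRange_self]
  · have hj0 : j ≠ 0 := ((Fin.zero_le _).trans_lt hj).ne'
    rw [if_neg hj0, if_neg hj.ne', if_pos hj, swap_apply_right, zero_add, Fin.cycleRange_of_gt hj]

theorem switchedSquare_self (h0 : h ≠ 0) (hh : h + h = 1) (j : Fin n) :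
    switchedSquare h h j = swap 0 h (h + j) := by
  have h1 := ne_one_of_add_self_eq_one h0 hh
  have sum_ne_zero (hjh : j ≠ -h) : h + j ≠ 0 := mt eq_neg_of_add_eq_zero_right hjh
  unfold switchedSquare columnPerm
  split_ifs with hj hjh
  · rw [hj, add_zero, add_zero]
  · rw [hjh, swap_apply_left, add_neg_cancel, swap_apply_left]
    linear_combination -hh
  · rw [swap_apply_of_ne_of_ne h0 h1, swap_apply_of_ne_of_ne (sum_ne_zero hjh) (by simpa using hj)]
  · rw [swap_apply_of_ne_of_ne (sum_ne_zero hjh) (by simpa using hj), Perm.one_apply]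

theorem isLatinSquare_switchedSquare (h0 : h ≠ 0) (hh : h + h = 1) :
    IsLatinSquare (switchedSquare h) := by
  have h1 := ne_one_of_add_self_eq_one h0 hh
  -- Row `0` needs no inspection: the columns and the other rows determine its set of symbols.
  refine isLatinSquare_of_forall_ne_injective 0
    (fun j => ((columnPerm h j).trans (Equiv.addRight j)).bijective) fun i hi => ?_
  obtain rfl | hi1 := eq_or_ne i 1
  · rw [switchedSquare_one h0 h1]
    exact (Fin.cycleRange (-h)).injective
  obtain rfl | hih := eq_or_ne i h
  · rw [funext (switchedSquare_self h0 hh)]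
    exact ((Equiv.addLeft i).trans (swap 0 i)).injective
  · have row_eq (j : Fin n) : switchedSquare h i j = i + j := by
      rw [switchedSquare, columnPerm_of_ne hi hi1 hih]
    rw [funext row_eq]
    exact (Equiv.addLeft i).injective

theorem IsTransversal.sum_columnPerm_sub_eq_zero {t : Fin n → Fin n}
    (ht : IsTransversal (switchedSquare h) t) (h0 : h ≠ 0) (hh : h + h = 1) :
    (columnPerm h (t 0) 0 - 0) + (columnPerm h (t 1) 1 - 1) + (columnPerm h (t h) h - h) = 0 := by
  have := nontrivial_of_ne h 0 h0
  have h1 := ne_one_of_add_self_eq_one h0 hh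
  calc _ = ∑ i ∈ {0, 1, h}, (columnPerm h (t i) i - i) := by
        rw [Finset.sum_insert (by simp [h0.symm]), Finset.sum_pair h1.symm, add_assoc]
    _ = ∑ i, (columnPerm h (t i) i - i) := by
        refine Finset.sum_subset (Finset.subset_univ _) fun i _ hi => ?_
        simp only [Finset.mem_insert, Finset.mem_singleton, not_or] at hi
        rw [columnPerm_of_ne hi.1 hi.2.1 hi.2.2, sub_self]
    _ = ∑ i, (switchedSquare h i (t i) - (i + t i)) := by
        simp only [switchedSquare, add_sub_add_right_eq_sub]
    _ = 0 := by rw [ht.sum_sub_add, sum_eq_zero_of_add_self_eq_one hh, neg_zero]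

theorem IsTransversal.three_eq_zero_of_switchedSquare {t : Fin n → Fin n}
    (ht : IsTransversal (switchedSquare h) t) (hth : t h = 0) (h0 : h ≠ 0) (hh : h + h = 1) :
    (3 : Fin n) = 0 := by
  have := nontrivial_of_ne h 0 h0
  have h1 := ne_one_of_add_self_eq_one h0 hh
  have t_ne_zero {i : Fin n} (hi : i ≠ h) : t i ≠ 0 := hth ▸ ht.1.injective.ne hi
  have perm_h : columnPerm h (t h) h = 0 := by
    rw [hth, columnPerm, if_pos rfl, swap_apply_right]
  have t_one_ne : t 1 ≠ -h := by
    intro h_one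
    refine h1 (ht.2.injective ?_)
    rw [h_one, switchedSquare_one h0 h1, Fin.cycleRange_self, switchedSquare, perm_h, hth,
      add_zero]
  have sum_eq_zero := ht.sum_columnPerm_sub_eq_zero h0 hh
  rw [perm_h] at sum_eq_zero
  obtain perm_zero | perm_zero := columnPerm_zero_eq_or h0 (t_ne_zero h0.symm) <;>
  obtain perm_one | perm_one := columnPerm_one_eq_or (t_ne_zero h1.symm) t_one_ne <;>
  rw [perm_zero, perm_one] at sum_eq_zero
  · exact absurd (by linear_combination -sum_eq_zero) h0
  · linear_combination -2 * sum_eq_zero - hh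
  · exact absurd (by linear_combination -sum_eq_zero) h1
  · exact absurd (by linear_combination -sum_eq_zero) h0

end Fin

theorem no_orthogonal_mate (n : ℕ) (hn : 0 < n) (h1 : n ≠ 1) (h3 : n ≠ 3) :
    ∃ A : Fin n → Fin n → Fin n, IsLatinSquare A ∧
      ∀ B : Fin n → Fin n → Fin n, IsLatinSquare B → ¬ IsOrthogonal A B := by
  have : NeZero n := ⟨hn.ne'⟩
  obtain n_even | n_odd := n.even_or_odd
  · refine ⟨(· + ·), isLatinSquare_add, fun B hB hAB => ?_⟩
    obtain ⟨t, ht, -⟩ := hAB.exists_isTransversal hB 0 0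
    exact sum_fin_ne_zero_of_even n_even ht.sum_eq_zero_of_add
  · have three_ne_zero : (3 : Fin n) ≠ 0 := fun h =>
      ((Nat.dvd_prime Nat.prime_three).1 (Fin.natCast_eq_zero.1 h)).elim h1 h3
    obtain ⟨h, hh⟩ := exists_fin_add_self_eq_one_of_odd n_odd
    have h_ne_zero : h ≠ 0 := by
      rintro rfl
      exact three_ne_zero (by linear_combination -3 * hh)
    refine ⟨switchedSquare h, isLatinSquare_switchedSquare h_ne_zero hh, fun B hB hAB => ?_⟩
    obtain ⟨t, ht, hth⟩ := hAB.exists_isTransversal hB h 0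
    exact three_ne_zero (ht.three_eq_zero_of_switchedSquare hth h_ne_zero hh)
end

section
/- For any integer n ≥ 1, if there exists an r-self-orthogonal Latin square of order n, then n ≤ r ≤ n², r ∉ {n+1, n²−1}, and (n, r) is not one of the following 26 exceptional pairs: (2,4), (3,5), (3,6), (3,7), (3,9), (4,6), (4,7), (4,8), (4,10), (4,11), (4,12), (4,13), (4,14), (5,8), (5,9), (5,12), (5,16), (5,18), (5,20), (5,22), (5,23), (6,32), (6,33), (6,34), (6,36), (7,46). -/
/-- The number of distinct ordered pairs obtained by superimposing `A` and `B`. -/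
def orthCount {k n : ℕ} (A B : Fin k → Fin n → Fin n) : ℕ :=
  (Finset.univ.image fun q : Fin k × Fin n => (A q.1 q.2, B q.1 q.2)).card

open Finset

/-!
Call the number of cells at which superimposing `A` and its transpose shows a pair of symbols
`(s, t)` its multiplicity. Multiplicities are symmetric in `s` and `t`, and for fixed `s` they sum
to `n`. So every symbol has a partner, which gives `n` pairs, and a symbol with a partner of
multiplicity different from `n` has at least two partners; if there were `n + 1` pairs, only one
symbol `a` could have two partners, but then a partner `b ≠ a` would have two as well. If
exactly one pair is missing, it is of the form `(a, a)` by symmetry; a row of the table of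
multiplicities without a zero consists of ones, so the row of `a` would sum to `n - 1`.

The exceptions of order at most `6` are ruled out by a backtracking search over the squares whose
first row is in natural order and whose first column is as small as renaming the symbols permits.
It is pruned by the number of cells that do not contribute a new pair. For `(7, 46)` three pairs are
missing; by the counting above they are `(a, a)`, `(b, c)`, `(c, b)`, and all multiplicities are
determined. This prunes the search further.
-/

section Multiplicity

variable {n : ℕ} {A : Fin n → Fin n → Fin n}

/-- The number of cells at which superimposing `A` and its transpose shows the pair `(s, t)`. -/
def pairMult (A : Fin n → Fin n → Fin n) (s t : Fin n) : ℕ :=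
  #{c : Fin n × Fin n | A c.1 c.2 = s ∧ A c.2 c.1 = t}

/-- The pairs of symbols that `A` and its transpose do not show. -/
def missingPairs (A : Fin n → Fin n → Fin n) : Finset (Fin n × Fin n) :=
  {p | pairMult A p.1 p.2 = 0}

/-- The symbols that `A` and its transpose show together with `s`. -/
def partners (A : Fin n → Fin n → Fin n) (s : Fin n) : Finset (Fin n) :=
  {t | pairMult A s t ≠ 0}

theorem mem_missingPairs {s t : Fin n} : (s, t) ∈ missingPairs A ↔ pairMult A s t = 0 := by
  simp [missingPairs]

theorem mem_partners {s t : Fin n} : t ∈ partners A s ↔ pairMult A s t ≠ 0 := by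
  simp [partners]

theorem pairMult_comm (A : Fin n → Fin n → Fin n) (s t : Fin n) :
    pairMult A s t = pairMult A t s :=
  card_equiv (Equiv.prodComm _ _) fun c => by simp [and_comm]

theorem pairMult_ne_zero_iff {s t : Fin n} :
    pairMult A s t ≠ 0 ↔ ∃ i j, A i j = s ∧ A j i = t := by
  simp [pairMult, filter_eq_empty_iff]

theorem two_le_pairMult_of_ne {i j : Fin n} (hij : i ≠ j) (h : A i j = A j i) :
    2 ≤ pairMult A (A i j) (A j i) :=
  one_lt_card.2 ⟨(i, j), by simp, (j, i), by simp [h], by simp [hij]⟩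

theorem exists_apply_self_eq {s : Fin n} (h : pairMult A s s = 1) : ∃ x, A x x = s := by
  obtain ⟨i, j, hij, hji⟩ := pairMult_ne_zero_iff.1 (h.trans_ne one_ne_zero)
  obtain rfl : i = j := by
    by_contra hne
    have := two_le_pairMult_of_ne hne (hij.trans hji.symm)
    rw [hij, hji] at this
    omega
  exact ⟨i, hij⟩

theorem orthCount_transpose (A : Fin n → Fin n → Fin n) :
    orthCount A (fun i j => A j i) = #{p : Fin n × Fin n | pairMult A p.1 p.2 ≠ 0} := by
  unfold orthCount
  congr 1
  ext ⟨s, t⟩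
  simp [pairMult_ne_zero_iff]

theorem orthCount_add_card_missingPairs (A : Fin n → Fin n → Fin n) :
    orthCount A (fun i j => A j i) + #(missingPairs A) = n ^ 2 := by
  rw [orthCount_transpose, missingPairs, add_comm, card_filter_add_card_filter_not]
  simp [sq]

theorem orthCount_eq_sum_card_partners (A : Fin n → Fin n → Fin n) :
    orthCount A (fun i j => A j i) = ∑ s, #(partners A s) := by
  rw [orthCount_transpose, card_filter, Fintype.sum_prod_type]
  simp only [partners, card_filter]

end Multiplicity

namespace IsLatinSquare

variable {n : ℕ} {A : Fin n → Fin n → Fin n}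

theorem sum_pairMult (hA : IsLatinSquare A) (s : Fin n) : ∑ t, pairMult A s t = n := by
  have card_row (i : Fin n) : #{j | A i j = s} = 1 := by
    obtain ⟨j, hj, huniq⟩ := (hA.1 i).existsUnique s
    exact card_eq_one.2 ⟨j, by ext k; simpa using ⟨huniq k, fun h => h ▸ hj⟩⟩
  calc ∑ t, pairMult A s t = #{c : Fin n × Fin n | A c.1 c.2 = s} := by
        rw [card_eq_sum_card_fiberwise (f := fun c : Fin n × Fin n => A c.2 c.1)
          (t := univ) (by simp)]
        simp only [filter_filter, pairMult]
    _ = ∑ i, #{j | A i j = s} := by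
        simp only [card_filter, Fintype.sum_prod_type]
    _ = n := by simp [card_row]

theorem pairMult_le (hA : IsLatinSquare A) (s t : Fin n) : pairMult A s t ≤ n :=
  (single_le_sum (f := pairMult A s) (by simp) (mem_univ t)).trans_eq (hA.sum_pairMult s)

theorem sum_pairMult_eq_card (hA : IsLatinSquare A) {s : Fin n} (T : Finset (Fin n))
    (h : ∀ t ∉ T, pairMult A s t = 1) : ∑ t ∈ T, pairMult A s t = #T := by
  have hsum := hA.sum_pairMult s
  rw [← sum_add_sum_compl T, sum_congr (s₁ := Tᶜ) rfl fun t ht => h t (mem_compl.1 ht),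
    ← card_eq_sum_ones] at hsum
  have hcard := card_add_card_compl T
  rw [Fintype.card_fin] at hcard
  omega

theorem one_le_card_partners (hA : IsLatinSquare A) (s : Fin n) : 1 ≤ #(partners A s) := by
  rw [one_le_card]
  by_contra! hempty
  have hzero : ∑ t, pairMult A s t = 0 := sum_eq_zero fun t _ => by
    simpa [mem_partners] using (hempty ▸ notMem_empty t : t ∉ partners A s)
  have := hA.sum_pairMult s
  have := s.pos
  omega

theorem two_le_card_partners (hA : IsLatinSquare A) {s t : Fin n} (hpos : pairMult A s t ≠ 0)
    (hlt : pairMult A s t ≠ n) : 2 ≤ #(partners A s) := by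
  by_contra! hcard
  have hone : #(partners A s) ≤ 1 := by omega
  refine hlt ((sum_eq_single t (fun u _ hu => ?_) (by simp)).symm.trans (hA.sum_pairMult s))
  by_contra hne
  exact hu (card_le_one.1 hone u (mem_partners.2 hne) t (mem_partners.2 hpos))

theorem le_orthCount (hA : IsLatinSquare A) : n ≤ orthCount A (fun i j => A j i) := by
  rw [orthCount_eq_sum_card_partners]
  simpa using sum_le_sum fun s (_ : s ∈ univ) => hA.one_le_card_partners s

theorem orthCount_ne_succ (hA : IsLatinSquare A) :
    orthCount A (fun i j => A j i) ≠ n + 1 := by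
  intro hsucc
  have hexcess : ∑ s, (#(partners A s) - 1) = 1 := by
    rw [sum_tsub_distrib _ fun s _ => hA.one_le_card_partners s,
      ← orthCount_eq_sum_card_partners, hsucc]
    simp
  obtain ⟨a, -, ha⟩ := exists_ne_zero_of_sum_ne_zero (hexcess.trans_ne one_ne_zero)
  obtain ⟨b, hb, hba⟩ := exists_mem_ne (show 1 < #(partners A a) by omega) a
  obtain ⟨c, hc, hcb⟩ := exists_mem_ne (show 1 < #(partners A a) by omega) b
  rw [mem_partners] at hb hc
  have hlt : pairMult A a b ≠ n := fun hab => hc <| by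
    have := sum_le_sum_of_subset (f := pairMult A a) (subset_univ {b, c})
    rw [sum_pair hcb.symm, hA.sum_pairMult] at this
    omega
  have hb2 : 2 ≤ #(partners A b) :=
    hA.two_le_card_partners (t := a) (by rwa [pairMult_comm]) (by rwa [pairMult_comm])
  have := sum_le_sum_of_subset (f := fun s => #(partners A s) - 1) (subset_univ {a, b})
  rw [sum_pair hba.symm, hexcess] at this
  omega

theorem pairMult_eq_one (hA : IsLatinSquare A) {s : Fin n} (h : ∀ t, pairMult A s t ≠ 0)
    (t : Fin n) : pairMult A s t = 1 := by
  have hsum : ∑ _t : Fin n, 1 = ∑ t, pairMult A s t := by simp [hA.sum_pairMult s]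
  exact ((sum_eq_sum_iff_of_le fun t _ => Nat.one_le_iff_ne_zero.2 (h t)).1 hsum t
    (mem_univ t)).symm

theorem card_missingPairs_ne_one (hA : IsLatinSquare A) : #(missingPairs A) ≠ 1 := by
  intro hcard
  obtain ⟨⟨a, b⟩, hab⟩ := card_eq_one.1 hcard
  have hzero {s t : Fin n} : pairMult A s t = 0 ↔ s = a ∧ t = b := by
    rw [← mem_missingPairs, hab]; simp
  obtain rfl : b = a := (hzero.1 (by rw [pairMult_comm]; exact hzero.2 ⟨rfl, rfl⟩)).1
  have hrow := hA.sum_pairMult_eq_card (s := b) {b} fun t ht => by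
    rw [pairMult_comm]
    exact hA.pairMult_eq_one (fun u hu => ht (by simp [hzero.1 hu])) b
  simp [hzero.2 ⟨rfl, rfl⟩] at hrow

end IsLatinSquare

section Relabel

variable {n : ℕ} {A : Fin n → Fin n → Fin n}

/-- The array obtained from `A` by giving the index `σ i` the new name `i`, for rows and columns
alike, and the symbol `τ s` the new name `s`. -/
def relabel (A : Fin n → Fin n → Fin n) (σ τ : Equiv.Perm (Fin n)) : Fin n → Fin n → Fin n :=
  fun i j => τ.symm (A (σ i) (σ j))

theorem pairMult_relabel (A : Fin n → Fin n → Fin n) (σ τ : Equiv.Perm (Fin n)) (s t : Fin n) :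
    pairMult (relabel A σ τ) s t = pairMult A (τ s) (τ t) :=
  card_equiv (σ.prodCongr σ) fun c => by simp [relabel, Equiv.symm_apply_eq]

theorem orthCount_relabel (A : Fin n → Fin n → Fin n) (σ τ : Equiv.Perm (Fin n)) :
    orthCount (relabel A σ τ) (fun i j => relabel A σ τ j i) = orthCount A (fun i j => A j i) := by
  rw [orthCount_transpose, orthCount_transpose]
  exact card_equiv (τ.prodCongr τ) fun p => by simp [pairMult_relabel]

theorem isLatinSquare_relabel (hA : IsLatinSquare A) (σ τ : Equiv.Perm (Fin n)) :
    IsLatinSquare (relabel A σ τ) :=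
  ⟨fun i => (τ.symm.bijective.comp (hA.1 (σ i))).comp σ.bijective,
    fun j => (τ.symm.bijective.comp (hA.2 (σ j))).comp σ.bijective⟩

/-- The normal form of the computer search: the first row is in natural order, and the symbols of
the first column appear there no later than a greedy naming of the symbols forces them to. -/
structure IsNormalized [NeZero n] (A : Fin n → Fin n → Fin n) : Prop where
  row_zero : ∀ j, A 0 j = j
  col_zero_le : ∀ j, (A j 0 : ℕ) ≤ j + 1

/- If `f (τ m)` comes after position `m + 1`, exchanging it with the value there disturbs no
earlier value. -/
theorem exists_perm_symm_apply_le (f : Fin n → Fin n) (m : ℕ) (τ₀ : Equiv.Perm (Fin n))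
    (h : ∀ k : Fin n, (k : ℕ) < m → (τ₀.symm (f (τ₀ k)) : ℕ) ≤ k + 1) :
    ∃ τ : Equiv.Perm (Fin n), (∀ k : Fin n, (k : ℕ) ≤ m → τ k = τ₀ k) ∧
      ∀ k, (τ.symm (f (τ k)) : ℕ) ≤ k + 1 := by
  rcases le_or_gt n (m + 1) with hm | hm
  · refine ⟨τ₀, fun _ _ => rfl, fun k => ?_⟩
    by_cases hk : (k : ℕ) < m
    · exact h k hk
    · omega
  let last : Fin n := ⟨m, by omega⟩
  let next : Fin n := ⟨m + 1, hm⟩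
  let target : Fin n := max next (τ₀.symm (f (τ₀ last)))
  let τ₁ : Equiv.Perm (Fin n) := (Equiv.swap next target).trans τ₀
  have hnext : next ≤ target := le_max_left _ _
  have swap_early {k : Fin n} (hk : (k : ℕ) ≤ m) : Equiv.swap next target k = k :=
    Equiv.swap_apply_of_ne_of_ne (by grind) (by grind)
  have hτ₁ {k : Fin n} (hk : (k : ℕ) ≤ m) : τ₁ k = τ₀ k := congrArg τ₀ (swap_early hk)
  obtain ⟨τ, hττ₁, hτ⟩ := exists_perm_symm_apply_le f (m + 1) τ₁ fun k hk => by
    rw [hτ₁ (by omega)]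
    change (Equiv.swap next target (τ₀.symm (f (τ₀ k))) : ℕ) ≤ k + 1
    rcases Nat.lt_succ_iff_lt_or_eq.1 hk with hlt | heq
    · rw [swap_early (by have := h k hlt; omega)]
      exact h k hlt
    · obtain rfl : k = last := Fin.ext heq
      rcases le_total (τ₀.symm (f (τ₀ last))) next with hle | hle
      · simp only [target, max_eq_left hle, Equiv.swap_self, Equiv.refl_apply]
        exact hle
      · simp [target, max_eq_right hle, next, last]
  exact ⟨τ, fun k hk => (hττ₁ k (by omega)).trans (hτ₁ hk), hτ⟩
termination_by n - m

theorem exists_isNormalized_relabel [NeZero n] (hA : IsLatinSquare A) (x : Fin n)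
    (τ₀ : Equiv.Perm (Fin n)) (h₀ : τ₀ 0 = A x x) :
    ∃ σ τ : Equiv.Perm (Fin n), (∀ k : Fin n, (k : ℕ) ≤ 1 → τ k = τ₀ k) ∧
      IsNormalized (relabel A σ τ) := by
  let row : Equiv.Perm (Fin n) := Equiv.ofBijective _ (hA.1 x)
  have row_apply (j : Fin n) : row j = A x j := rfl
  have hrow : row.symm (τ₀ 0) = x := h₀ ▸ row.symm_apply_apply x
  obtain ⟨τ, hτ₀, hτ⟩ := exists_perm_symm_apply_le (fun y => A (row.symm y) x) 1 τ₀ fun k hk => by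
    obtain rfl : k = 0 := Fin.ext (by simpa using hk)
    simp [hrow, ← h₀]
  let σ : Equiv.Perm (Fin n) := τ.trans row.symm
  have hσ₀ : σ 0 = x := by simp [σ, hτ₀ 0 (by simp), hrow]
  refine ⟨σ, τ, hτ₀, fun j => ?_, fun j => ?_⟩
  · simp [relabel, hσ₀, ← row_apply, σ]
  · simpa [relabel, hσ₀, σ] using hτ j

end Relabel

namespace TransposeSearch

section Mask

variable {n : ℕ}

/-- What the search keeps track of: `(0, i, s)` says that row `i` contains `s`, `(1, j, s)` that
column `j` contains `s`, and `(2, s, t)` that some cell shows the pair `(s, t)`. -/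
abbrev Fact (n : ℕ) := Fin 3 × Fin n × Fin n

/-- The position of the bit that represents a fact in a bit mask. -/
def factIndex (x : Fact n) : ℕ := finProdFinEquiv (x.1, finProdFinEquiv x.2)

/-- The bit mask of a list of facts. -/
def mask (l : List (Fact n)) : ℕ := l.foldr (fun x m => 2 ^ factIndex x ||| m) 0

theorem factIndex_injective : Function.Injective (factIndex (n := n)) := by
  intro x y h
  have h' := finProdFinEquiv.injective (Fin.val_injective h)
  rw [Prod.mk.injEq, finProdFinEquiv.injective.eq_iff] at h'
  exact Prod.ext h'.1 h'.2

theorem testBit_mask_factIndex {l : List (Fact n)} {x : Fact n} :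
    (mask l).testBit (factIndex x) = true ↔ x ∈ l := by
  induction l with
  | nil => simp [mask]
  | cons y l ih =>
    change (2 ^ factIndex y ||| mask l).testBit _ = true ↔ _
    rw [Nat.testBit_or, Bool.or_eq_true, ih, Nat.testBit_two_pow, decide_eq_true_iff,
      factIndex_injective.eq_iff, List.mem_cons, eq_comm]

theorem land_mask_eq_zero_iff {u : ℕ} {l : List (Fact n)} :
    u &&& mask l = 0 ↔ ∀ x ∈ l, u.testBit (factIndex x) ≠ true := by
  induction l with
  | nil => simp [mask]
  | cons y l ih =>
    change u &&& (2 ^ factIndex y ||| mask l) = 0 ↔ _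
    simp [Nat.and_or_distrib_left, Nat.or_eq_zero_iff, Nat.and_two_pow, ih]

end Mask

section Definitions

variable {n : ℕ}

/-- A way to fill two transposed cells once the symbol of the first one is given. -/
structure Choice where
  /-- The facts that must not hold before. -/
  excluded : ℕ
  /-- The facts about pairs of symbols that hold afterwards. -/
  pairs : ℕ
  /-- The number of cells minus the number of pairs of symbols, if these pairs are new. -/
  freshCost : ℕ
  /-- The number of cells. -/
  repeatCost : ℕ
  /-- The facts that hold afterwards. -/
  facts : ℕ

/-- A list, represented by the function `List.any` on it. -/
abbrev AnyOf (α : Type) := (α → Bool) → Bool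

/-- A symbol for the first of two transposed cells, with the choices for the second one. -/
structure HalfChoice where
  /-- The facts about the first cell, which must not hold before. -/
  excluded : ℕ
  /-- The ways to fill the second cell. -/
  choices : AnyOf Choice

/-- The conditions on symbols `s` and `t` of a normalized square in the cells `(i, j)` and `(j, i)`
that do not depend on other cells. -/
abbrev IsAdmissible [NeZero n] (cap : Fin n → Fin n → ℕ) (i j s t : Fin n) : Prop :=
  (s = j ↔ i = 0) ∧ (t = i ↔ j = 0) ∧ (i = 0 → (t : ℕ) ≤ j + 1) ∧ (i = j → s = t) ∧
    (if s = t ∧ i ≠ j then 2 else 1) ≤ cap s t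

/-- The choice of `s` and `t` for the cells `(i, j)` and `(j, i)`. -/
def choice (cap : Fin n → Fin n → ℕ) (i j s t : Fin n) : Choice where
  excluded := mask ([(0, j, t), (1, i, t)] ++ if cap s t = 1 then [(2, s, t)] else [])
  pairs := mask [(2, s, t), (2, t, s)]
  freshCost := (if i = j then 1 else 2) - (if s = t then 1 else 2)
  repeatCost := if i = j then 1 else 2
  facts := mask [(0, i, s), (1, j, s), (2, s, t), (0, j, t), (1, i, t), (2, t, s)]

/-- The admissible choices for two transposed cells with given symbol `s` in the first one. -/
def choices [NeZero n] (cap : Fin n → Fin n → ℕ) (i j s : Fin n) : List Choice :=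
  ((List.finRange n).filter fun t => IsAdmissible cap i j s t).map (choice cap i j s)

/-- `k n`, but the kernel evaluates `n` to a literal before passing it to `k`, since the recursor
has to inspect it. -/
noncomputable def force {α : Type} (n : ℕ) (k : ℕ → α) : α := Nat.rec (k 0) (fun m _ => k m.succ) n

/-- `k o`, with evaluated fields of `o`. -/
noncomputable def forceChoice (o : Choice) (k : Choice → Bool) : Bool :=
  force o.excluded fun e => force o.pairs fun p => force o.freshCost fun f =>
    force o.repeatCost fun r => force o.facts fun a => k ⟨e, p, f, r, a⟩

/-- `k (l.map f).any`, where the list is unfolded to a closed term before it is passed to `k`, and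
`eval a` evaluates `f a`. -/
noncomputable def forceAny {α β : Type} (eval : α → (β → Bool) → Bool) :
    List α → (AnyOf β → Bool) → Bool
  | [], k => k fun _ => false
  | a :: l, k => eval a fun b => forceAny eval l fun any => k fun p => Bool.rec (any p) true (p b)

/-- The evaluated half choice of `s` for the cell `(i, j)`. -/
noncomputable def forceHalfChoice [NeZero n] (cap : Fin n → Fin n → ℕ) (i j s : Fin n)
    (k : HalfChoice → Bool) : Bool :=
  force (mask [(0, i, s), (1, j, s)]) fun e =>
    forceAny forceChoice (choices cap i j s) fun any => k ⟨e, any⟩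

/-- The evaluated half choices for the cells of a list. -/
noncomputable def forceCells [NeZero n] (cap : Fin n → Fin n → ℕ) :
    List (Fin n × Fin n) → (List (AnyOf HalfChoice) → Bool) → Bool
  | [], k => k []
  | c :: cs, k => forceAny (forceHalfChoice cap c.1 c.2) (List.finRange n) fun any =>
      forceCells cap cs fun anys => k (any :: anys)

/-- `b`, if the masks `used` and `m` are disjoint. -/
noncomputable def whenFree (used m : ℕ) (b : Bool) : Bool :=
  Bool.rec false b (Nat.beq (Nat.land used m) 0)

/-- `k (w + cost)`, if this waste is at most `B`. -/
noncomputable def spend (B : ℕ) (k : ℕ → Bool) (w cost : ℕ) : Bool :=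
  Nat.rec (k w) (fun _ _ => force (Nat.add w cost) fun w' => Bool.rec false (k w') (Nat.ble w' B))
    cost

/-- Make the choice `o` and continue the search with `k`. -/
noncomputable def place (B : ℕ) (k : ℕ → ℕ → Bool) (used w : ℕ) (o : Choice) : Bool :=
  whenFree used o.excluded <| spend B (k (Nat.lor used o.facts)) w <|
    Bool.rec o.repeatCost o.freshCost (Nat.beq (Nat.land used o.pairs) 0)

/-- Can the remaining cells be filled in such a way that the final waste satisfies `leaf`? -/
noncomputable def fill (B : ℕ) (leaf : ℕ → Bool) (cells : List (AnyOf HalfChoice)) :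
    ℕ → ℕ → Bool :=
  List.rec (fun _ w => leaf w)
    (fun cell _ k used w => cell fun h => whenFree used h.excluded (h.choices (place B k used w)))
    cells

/-- The cells on and above the diagonal in the order of the search: the first row, then the columns
from right to left, each starting with its diagonal cell. -/
def cellOrder (n : ℕ) [NeZero n] : List (Fin n × Fin n) :=
  (List.finRange n).map (0, ·) ++
    (((List.finRange n).reverse ×ˢ List.finRange n).filter fun c => c.2 < c.1).map
      fun c => (if c.2 = 0 then c.1 else c.2, c.1)

/-- The search for a normalized Latin square of order `n` that shows the pair `(s, t)` at most
`cap s t` times and shows `r` pairs in total, where `r ∈ bad`. Branches are cut off when the waste,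
the number of cells minus the number of pairs they show, exceeds `B`. -/
noncomputable def search (n : ℕ) [NeZero n] (cap : Fin n → Fin n → ℕ) (B : ℕ) (bad : List ℕ) :
    Bool :=
  forceCells cap (cellOrder n) fun cells =>
    fill B (fun w => bad.contains (n * n - w)) cells 0 0

end Definitions

section Evaluation

variable {n : ℕ} [NeZero n] {cap : Fin n → Fin n → ℕ}

theorem force_eq {α : Type} (n : ℕ) (k : ℕ → α) : force n k = k n := by cases n <;> rfl

theorem forceChoice_eq (o : Choice) (k : Choice → Bool) : forceChoice o k = k o := by
  simp only [forceChoice, force_eq]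

theorem forceAny_eq {α β : Type} {eval : α → (β → Bool) → Bool} {f : α → β}
    (h : ∀ a k, eval a k = k (f a)) (l : List α) (k : AnyOf β → Bool) :
    forceAny eval l k = k (l.map f).any := by
  induction l generalizing k with
  | nil => rfl
  | cons a l ih =>
    rw [forceAny, h, ih]
    congr 1
    funext p
    cases hp : p (f a) <;> simp [hp]

/-- The half choice of the symbol `s` for the cell `(i, j)`. -/
def halfChoice (cap : Fin n → Fin n → ℕ) (i j s : Fin n) : HalfChoice :=
  ⟨mask [(0, i, s), (1, j, s)], (choices cap i j s).any⟩

/-- The half choices for the cell `c`. -/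
def halfChoices (cap : Fin n → Fin n → ℕ) (c : Fin n × Fin n) : AnyOf HalfChoice :=
  ((List.finRange n).map (halfChoice cap c.1 c.2)).any

theorem forceHalfChoice_eq (i j s : Fin n) (k : HalfChoice → Bool) :
    forceHalfChoice cap i j s k = k (halfChoice cap i j s) := by
  rw [forceHalfChoice, force_eq, forceAny_eq forceChoice_eq, List.map_id']
  rfl

theorem forceCells_eq (cs : List (Fin n × Fin n)) (k : List (AnyOf HalfChoice) → Bool) :
    forceCells cap cs k = k (cs.map (halfChoices cap)) := by
  induction cs generalizing k with
  | nil => rfl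
  | cons c cs ih =>
    rw [forceCells, forceAny_eq (forceHalfChoice_eq c.1 c.2), ih]
    rfl

theorem beq_land_zero (used m : ℕ) :
    Nat.beq (Nat.land used m) 0 = decide (used &&& m = 0) := by
  rw [Bool.eq_iff_iff, Nat.beq_eq, decide_eq_true_iff]
  rfl

theorem whenFree_eq {used m : ℕ} (h : used &&& m = 0) (b : Bool) : whenFree used m b = b := by
  rw [whenFree, beq_land_zero, decide_eq_true h]

theorem spend_eq {B w cost : ℕ} (h : w + cost ≤ B) (k : ℕ → Bool) :
    spend B k w cost = k (w + cost) := by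
  cases cost with
  | zero => rfl
  | succ m =>
    have : Nat.ble (w + (m + 1)) B = true := Nat.ble_eq.mpr h
    simp only [spend, force_eq]
    exact congrArg (Bool.rec false (k (w + (m + 1)))) this

theorem fill_cons_eq_true {B : ℕ} {leaf : ℕ → Bool} {cells : List (AnyOf HalfChoice)}
    {i j s t : Fin n} {used w cost : ℕ} (hadm : IsAdmissible cap i j s t)
    (hhalf : used &&& (halfChoice cap i j s).excluded = 0)
    (hfree : used &&& (choice cap i j s t).excluded = 0)
    (hcost : cost = if used &&& (choice cap i j s t).pairs = 0 then
      (choice cap i j s t).freshCost else (choice cap i j s t).repeatCost)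
    (hB : w + cost ≤ B)
    (hfill : fill B leaf cells (used ||| (choice cap i j s t).facts) (w + cost) = true) :
    fill B leaf (halfChoices cap (i, j) :: cells) used w = true := by
  have hplace : place B (fill B leaf cells) used w (choice cap i j s t) = true := by
    have : (Bool.rec (choice cap i j s t).repeatCost (choice cap i j s t).freshCost
        (Nat.beq (Nat.land used (choice cap i j s t).pairs) 0) : ℕ) = cost := by
      rw [hcost, beq_land_zero]
      split_ifs with h <;> simp only [h, decide_true, decide_false]
    rw [place, whenFree_eq hfree, this, spend_eq hB]
    exact hfill
  refine List.any_eq_true.2 ⟨halfChoice cap i j s,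
    List.mem_map_of_mem (List.mem_finRange s), ?_⟩
  rw [whenFree_eq hhalf]
  refine List.any_eq_true.2 ⟨choice cap i j s t, List.mem_map_of_mem ?_, hplace⟩
  exact List.mem_filter.2 ⟨List.mem_finRange t, decide_eq_true hadm⟩

end Evaluation

section Completeness

variable {n : ℕ} {A : Fin n → Fin n → Fin n} {D : Finset (Fin n × Fin n)} {used w : ℕ}

/-- The pair of symbols that superimposing `A` and its transpose shows at `c`. -/
def shown (A : Fin n → Fin n → Fin n) (c : Fin n × Fin n) : Fin n × Fin n :=
  (A c.1 c.2, A c.2 c.1)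

/-- The facts about `A` that can be read off the cell `c`. -/
def factsAt (A : Fin n → Fin n → Fin n) (c : Fin n × Fin n) : List (Fact n) :=
  [(0, c.1, A c.1 c.2), (1, c.2, A c.1 c.2), (2, shown A c)]

/-- A state of the search, given by a mask and a waste, agrees with the cells of `A` in `D`. The
waste is the number of cells minus the number of different pairs of symbols in them. -/
structure Records (A : Fin n → Fin n → Fin n) (D : Finset (Fin n × Fin n)) (used w : ℕ) :
    Prop where
  testBit_iff : ∀ x, used.testBit (factIndex x) = true ↔ ∃ c ∈ D, x ∈ factsAt A c
  waste_add_card : w + #(D.image (shown A)) = #D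

theorem Records.testBit_pair_iff (hrec : Records A D used w) (s t : Fin n) :
    used.testBit (factIndex (2, s, t)) = true ↔ (s, t) ∈ D.image (shown A) := by
  simp [hrec.testBit_iff, factsAt, eq_comm]

theorem Records.land_line_eq_zero (hrec : Records A D used w) (hA : IsLatinSquare A)
    {c : Fin n × Fin n} (hc : c ∉ D) :
    used &&& mask [(0, c.1, A c.1 c.2), (1, c.2, A c.1 c.2)] = 0 := by
  simp only [land_mask_eq_zero_iff, ne_eq, hrec.testBit_iff, List.forall_mem_cons, not_exists,
    not_and]
  refine ⟨fun d hd hmem => hc ?_, fun d hd hmem => hc ?_, by simp⟩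
  · obtain ⟨hrow, hsymbol⟩ : c.1 = d.1 ∧ A c.1 c.2 = A d.1 d.2 := by simpa [factsAt] using hmem
    have := (hA.1 c.1).1 (hsymbol.trans (by rw [hrow]) : A c.1 c.2 = A c.1 d.2)
    rwa [Prod.ext hrow this]
  · obtain ⟨hcol, hsymbol⟩ : c.2 = d.2 ∧ A c.1 c.2 = A d.1 d.2 := by simpa [factsAt] using hmem
    have := (hA.2 c.2).1 (hsymbol.trans (by rw [hcol]) : A c.1 c.2 = A d.1 c.2)
    rwa [Prod.ext this hcol]

theorem Records.two_le_pairMult (hrec : Records A D used w) {c : Fin n × Fin n} (hc : c ∉ D)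
    (h : used.testBit (factIndex (2, shown A c)) = true) :
    2 ≤ pairMult A (A c.1 c.2) (A c.2 c.1) := by
  obtain ⟨d, hd, hdc⟩ := mem_image.1 ((hrec.testBit_pair_iff _ _).1 h)
  obtain ⟨h₁, h₂⟩ := Prod.mk.injEq _ _ _ _ ▸ hdc
  exact one_lt_card.2 ⟨c, by simp, d, by simp [h₁, h₂], fun hcd => hc (hcd ▸ hd)⟩

theorem Records.land_excluded_eq_zero (hrec : Records A D used w) (hA : IsLatinSquare A)
    {cap : Fin n → Fin n → ℕ} (hcap : ∀ s t, pairMult A s t ≤ cap s t) {i j : Fin n}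
    (hij : (i, j) ∉ D) (hji : (j, i) ∉ D) :
    used &&& (choice cap i j (A i j) (A j i)).excluded = 0 := by
  rw [choice, land_mask_eq_zero_iff, List.forall_mem_append]
  refine ⟨land_mask_eq_zero_iff.1 (hrec.land_line_eq_zero hA hji), fun x hx hbit => ?_⟩
  split_ifs at hx with hone
  · obtain rfl := List.mem_singleton.1 hx
    have htwo : 2 ≤ cap (A i j) (A j i) := (hrec.two_le_pairMult hij hbit).trans (hcap _ _)
    omega
  · simp at hx

theorem isAdmissible [NeZero n] (hA : IsLatinSquare A) (hnorm : IsNormalized A)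
    {cap : Fin n → Fin n → ℕ} (hcap : ∀ s t, pairMult A s t ≤ cap s t) (i j : Fin n) :
    IsAdmissible cap i j (A i j) (A j i) := by
  have eq_iff (i j : Fin n) : A i j = j ↔ i = 0 := by
    conv_lhs => rhs; rw [← hnorm.row_zero j]
    exact (hA.2 j).1.eq_iff
  refine ⟨eq_iff i j, eq_iff j i, ?_, by rintro rfl; rfl, ?_⟩
  · rintro rfl
    exact hnorm.col_zero_le j
  · refine le_trans ?_ (hcap _ _)
    split_ifs with h
    · exact two_le_pairMult_of_ne h.2 h.1
    · exact Nat.one_le_iff_ne_zero.2 (pairMult_ne_zero_iff.2 ⟨i, j, rfl, rfl⟩)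

theorem card_insert_insert_swap {α : Type*} [DecidableEq α] {S : Finset (α × α)} {a b : α}
    (hab : (a, b) ∉ S) (hba : (b, a) ∉ S) :
    #(insert (a, b) (insert (b, a) S)) = #S + if a = b then 1 else 2 := by
  split_ifs with h
  · subst h
    rw [insert_idem, card_insert_of_notMem hab]
  · rw [card_insert_of_notMem (by simp [hab, h]), card_insert_of_notMem hba]

theorem testBit_choice_facts_iff {cap : Fin n → Fin n → ℕ} {i j : Fin n} {x : Fact n} :
    (choice cap i j (A i j) (A j i)).facts.testBit (factIndex x) = true ↔
      x ∈ factsAt A (i, j) ∨ x ∈ factsAt A (j, i) :=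
  testBit_mask_factIndex.trans (List.mem_append (s := factsAt A (i, j)))

theorem shown_mem_image_comm (hswap : ∀ c ∈ D, c.swap ∈ D) {i j : Fin n}
    (h : shown A (i, j) ∈ D.image (shown A)) : shown A (j, i) ∈ D.image (shown A) := by
  obtain ⟨c, hc, hshown⟩ := mem_image.1 h
  exact mem_image.2 ⟨c.swap, hswap c hc, congrArg Prod.swap hshown⟩

theorem Records.land_pairs_eq_zero_iff (hrec : Records A D used w)
    (hswap : ∀ c ∈ D, c.swap ∈ D) {cap : Fin n → Fin n → ℕ} {i j : Fin n} :
    used &&& (choice cap i j (A i j) (A j i)).pairs = 0 ↔ shown A (i, j) ∉ D.image (shown A) := by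
  simp only [choice, land_mask_eq_zero_iff, List.forall_mem_cons, ne_eq, hrec.testBit_pair_iff]
  exact ⟨fun h => h.1, fun h => ⟨h, mt (shown_mem_image_comm hswap) h, by simp⟩⟩

theorem Records.insert_insert (hrec : Records A D used w) (hswap : ∀ c ∈ D, c.swap ∈ D)
    (cap : Fin n → Fin n → ℕ) {i j : Fin n} (hij : (i, j) ∉ D) :
    Records A (insert (i, j) (insert (j, i) D))
      (used ||| (choice cap i j (A i j) (A j i)).facts)
      (w + if used &&& (choice cap i j (A i j) (A j i)).pairs = 0
        then (choice cap i j (A i j) (A j i)).freshCost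
        else (choice cap i j (A i j) (A j i)).repeatCost) where
  testBit_iff x := by
    rw [Nat.testBit_or, Bool.or_eq_true, hrec.testBit_iff, testBit_choice_facts_iff]
    simp only [exists_mem_insert]
    rw [or_comm, or_assoc]
  waste_add_card := by
    have hji : (j, i) ∉ D := fun h => hij (hswap _ h)
    have hwaste := hrec.waste_add_card
    rw [image_insert, image_insert, card_insert_insert_swap hij hji]
    simp only [hrec.land_pairs_eq_zero_iff hswap]
    by_cases hnew : shown A (i, j) ∉ D.image (shown A)
    · have hcard : #(insert (shown A (i, j)) (insert (shown A (j, i))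
          (D.image (shown A)))) = #(D.image (shown A)) + if A i j = A j i then 1 else 2 :=
        card_insert_insert_swap hnew (mt (shown_mem_image_comm hswap) hnew)
      have hdiag : i = j → A i j = A j i := by rintro rfl; rfl
      rw [hcard, if_pos hnew, choice]
      grind
    · simp only [if_neg hnew, choice]
      rw [not_not] at hnew
      rw [insert_eq_of_mem (shown_mem_image_comm hswap hnew), insert_eq_of_mem hnew]
      omega

theorem Records.add_orthCount_le (hrec : Records A D used w) :
    w + orthCount A (fun i j => A j i) ≤ n ^ 2 := by
  have hunion : univ.image (shown A) = D.image (shown A) ∪ Dᶜ.image (shown A) := by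
    rw [← image_union, union_compl]
  have horth : orthCount A (fun i j => A j i) ≤ #(D.image (shown A)) + #Dᶜ :=
    calc #(univ.image (shown A)) ≤ _ := hunion ▸ card_union_le _ _
      _ ≤ _ := Nat.add_le_add_left card_image_le _
  have hcompl := card_add_card_compl D
  have hwaste := hrec.waste_add_card
  rw [Fintype.card_prod, Fintype.card_fin, ← sq] at hcompl
  omega

theorem Records.add_orthCount_eq (hrec : Records A univ used w) :
    w + orthCount A (fun i j => A j i) = n ^ 2 :=
  hrec.waste_add_card.trans (by simp [sq])

/-- The cells that are filled when the cells in `cs` and their transposes are still empty. -/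
def settled (cs : List (Fin n × Fin n)) : Finset (Fin n × Fin n) :=
  {c | c ∉ cs ∧ c.swap ∉ cs}

theorem settled_eq_insert {i j : Fin n} {cs : List (Fin n × Fin n)} (hle : i ≤ j)
    (hcs : ∀ c ∈ cs, c.1 ≤ c.2) (hnotMem : (i, j) ∉ cs) :
    settled cs = insert (i, j) (insert (j, i) (settled ((i, j) :: cs))) := by
  have hji : (j, i) ∉ cs := fun h => hnotMem (by
    obtain rfl : i = j := le_antisymm hle (hcs _ h)
    exact h)
  ext ⟨k, l⟩
  simp only [settled, mem_filter, mem_univ, true_and, mem_insert, List.mem_cons, not_or,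
    Prod.swap_prod_mk, Prod.mk.injEq]
  grind

theorem fill_eq_true [NeZero n] (hA : IsLatinSquare A) (hnorm : IsNormalized A)
    {cap : Fin n → Fin n → ℕ} (hcap : ∀ s t, pairMult A s t ≤ cap s t) {B : ℕ}
    (hB : n ^ 2 ≤ orthCount A (fun i j => A j i) + B) {leaf : ℕ → Bool}
    (hleaf : ∀ w, w + orthCount A (fun i j => A j i) = n ^ 2 → leaf w = true)
    {cs : List (Fin n × Fin n)} (hnodup : cs.Nodup) (hle : ∀ c ∈ cs, c.1 ≤ c.2)
    (hrec : Records A (settled cs) used w) :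
    fill B leaf (cs.map (halfChoices cap)) used w = true := by
  induction cs generalizing used w with
  | nil =>
    rw [show settled (n := n) [] = univ by simp [settled]] at hrec
    exact hleaf w hrec.add_orthCount_eq
  | cons c cs ih =>
    obtain ⟨i, j⟩ := c
    obtain ⟨hnotMem, hnodup⟩ := List.nodup_cons.1 hnodup
    obtain ⟨hij, hle⟩ := List.forall_mem_cons.1 hle
    have hij_empty : (i, j) ∉ settled ((i, j) :: cs) := by simp [settled]
    have hji_empty : (j, i) ∉ settled ((i, j) :: cs) := by simp [settled]
    have hrec' := hrec.insert_insert (by simp [settled, and_comm]) cap hij_empty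
    rw [← settled_eq_insert hij hle hnotMem] at hrec'
    have hwaste := hrec'.add_orthCount_le
    exact fill_cons_eq_true (isAdmissible hA hnorm hcap i j)
      (hrec.land_line_eq_zero hA hij_empty)
      (hrec.land_excluded_eq_zero hA hcap hij_empty hji_empty) rfl (by omega)
      (ih hnodup hle hrec')

theorem le_of_mem_cellOrder [NeZero n] {c : Fin n × Fin n} (hc : c ∈ cellOrder n) :
    c.1 ≤ c.2 := by
  obtain hc | hc := List.mem_append.1 hc
  · obtain ⟨j, -, rfl⟩ := List.mem_map.1 hc
    exact Fin.zero_le j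
  · obtain ⟨d, hd, rfl⟩ := List.mem_map.1 hc
    have hlt : d.2 < d.1 := by simpa using (List.mem_filter.1 hd).2
    dsimp only
    split_ifs
    · rfl
    · exact hlt.le

theorem mem_cellOrder [NeZero n] {i j : Fin n} (hij : i ≤ j) : (i, j) ∈ cellOrder n := by
  simp only [cellOrder, List.mem_append, List.mem_map, List.mem_filter, List.mem_product,
    List.mem_reverse, List.mem_finRange, true_and, decide_eq_true_eq, Prod.mk.injEq, Prod.exists]
  rcases eq_or_ne i 0 with rfl | hi
  · exact .inl ⟨j, rfl, rfl⟩
  · rcases hij.eq_or_lt with rfl | hlt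
    · exact .inr ⟨i, 0, Fin.pos_iff_ne_zero.2 hi, by simp⟩
    · exact .inr ⟨j, i, hlt, by simp [hi]⟩

theorem nodup_cellOrder [NeZero n] : (cellOrder n).Nodup := by
  have hlower : (((List.finRange n).reverse ×ˢ List.finRange n).filter
      fun c => c.2 < c.1).Nodup :=
    ((List.nodup_reverse.2 (List.nodup_finRange n)).product (List.nodup_finRange n)).filter _
  refine List.Nodup.append ((List.nodup_finRange n).map fun _ _ h => by simpa using h)
    (hlower.map_on ?_) ?_
  · intro c hc d hd h
    simp only [List.mem_filter, decide_eq_true_eq] at hc hd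
    grind
  · intro c hc hd
    simp only [List.mem_filter, List.mem_map, decide_eq_true_eq] at hc hd
    grind

theorem settled_cellOrder [NeZero n] : settled (cellOrder n) = ∅ := by
  refine filter_eq_empty_iff.2 fun c _ h => ?_
  rcases le_total c.1 c.2 with hle | hle
  · exact h.1 (mem_cellOrder hle)
  · exact h.2 (mem_cellOrder hle)

theorem orthCount_notMem_of_search_eq_false [NeZero n] (hA : IsLatinSquare A)
    (hnorm : IsNormalized A) {cap : Fin n → Fin n → ℕ} (hcap : ∀ s t, pairMult A s t ≤ cap s t)
    {B : ℕ} {bad : List ℕ} (hB : ∀ r ∈ bad, n ^ 2 ≤ r + B)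
    (hsearch : search n cap B bad = false) : orthCount A (fun i j => A j i) ∉ bad := by
  intro hbad
  refine Bool.false_ne_true (hsearch.symm.trans ?_)
  rw [search, forceCells_eq]
  refine fill_eq_true hA hnorm hcap (hB _ hbad) (fun w hw => ?_) nodup_cellOrder
    (fun c => le_of_mem_cellOrder) ?_
  · rwa [List.contains_iff_mem, ← sq, ← hw, Nat.add_sub_cancel_left]
  · rw [settled_cellOrder]
    exact ⟨by simp, by simp⟩

end Completeness

end TransposeSearch

section ThreeMissing

theorem exists_eq_of_card_eq_three_of_swap_mem {α : Type*} [DecidableEq α] {S : Finset (α × α)}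
    (hswap : ∀ p ∈ S, p.swap ∈ S) (hcard : #S = 3) :
    (∃ a b c, a ≠ b ∧ a ≠ c ∧ b ≠ c ∧ S = {(a, a), (b, b), (c, c)}) ∨
      ∃ a b c, b ≠ c ∧ S = {(a, a), (b, c), (c, b)} := by
  by_cases hdiag : ∀ p ∈ S, p.1 = p.2
  · obtain ⟨⟨a, a'⟩, ⟨b, b'⟩, ⟨c, c'⟩, hab, hac, hbc, rfl⟩ := card_eq_three.1 hcard
    obtain ⟨rfl, rfl, rfl⟩ : a = a' ∧ b = b' ∧ c = c' := by simpa using hdiag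
    exact .inl ⟨a, b, c, by simpa using hab, by simpa using hac, by simpa using hbc, rfl⟩
  · push Not at hdiag
    obtain ⟨⟨b, c⟩, hbc, hne⟩ := hdiag
    have hsub : {(b, c), (c, b)} ⊆ S := by
      simpa [insert_subset_iff] using ⟨hbc, hswap _ hbc⟩
    obtain ⟨⟨a, a'⟩, ha⟩ := card_eq_one.1 (show #(S \ {(b, c), (c, b)}) = 1 by
      rw [card_sdiff_of_subset hsub, hcard, card_pair (by simp [hne])])
    have hS : S = {(a, a'), (b, c), (c, b)} := by
      rw [← sdiff_union_of_subset hsub, ha, singleton_union]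
    have hmem : (a, a') ∈ S \ {(b, c), (c, b)} := by simp [ha]
    have hmem' : (a', a) ∈ S \ {(b, c), (c, b)} := by
      have := hswap _ (mem_sdiff.1 hmem).1
      grind
    obtain rfl : a' = a := by simpa [ha] using congrArg Prod.fst (mem_singleton.1 (ha ▸ hmem'))
    exact .inr ⟨a', b, c, hne, hS⟩

variable {n : ℕ} {A : Fin n → Fin n → Fin n}

/-- The multiplicities of the pairs of symbols in a square with missing pairs `(a, a)`, `(b, c)`
and `(c, b)`, up to an exchange of `b` and `c`. -/
def threeMissingMult (a b c s t : Fin n) : ℕ :=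
  if s = a ∧ t = a ∨ s = b ∧ t = c ∨ s = c ∧ t = b then 0
  else if s = a ∧ t = b ∨ s = b ∧ t = a ∨ s = c ∧ t = c then 2 else 1

theorem threeMissingMult_apply (τ : Equiv.Perm (Fin n)) (a b c s t : Fin n) :
    threeMissingMult (τ a) (τ b) (τ c) (τ s) (τ t) = threeMissingMult a b c s t := by
  simp only [threeMissingMult, τ.injective.eq_iff]

theorem IsLatinSquare.sum_pairMult_eq_card_of_missingPairs_subset (hA : IsLatinSquare A)
    {T : Finset (Fin n)} (hT : missingPairs A ⊆ T ×ˢ T) (s : Fin n) :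
    ∑ t ∈ T, pairMult A s t = #T :=
  hA.sum_pairMult_eq_card T fun t ht => by
    rw [pairMult_comm]
    exact hA.pairMult_eq_one
      (fun u hu => ht (mem_product.1 (hT (mem_missingPairs.2 hu))).1) s

theorem IsLatinSquare.pairMult_add_add_eq_three (hA : IsLatinSquare A) {a b c : Fin n}
    (hab : a ≠ b) (hac : a ≠ c) (hbc : b ≠ c)
    (hT : missingPairs A ⊆ ({a, b, c} : Finset (Fin n)) ×ˢ {a, b, c}) (s : Fin n) :
    pairMult A s a + pairMult A s b + pairMult A s c = 3 := by
  have hsum := hA.sum_pairMult_eq_card_of_missingPairs_subset hT s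
  rwa [card_eq_three.2 ⟨a, b, c, hab, hac, hbc, rfl⟩, sum_insert (by simp [hab, hac]),
    sum_pair hbc, ← add_assoc] at hsum

theorem IsLatinSquare.missingPairs_ne_three_loops (hA : IsLatinSquare A) {a b c : Fin n}
    (hab : a ≠ b) (hac : a ≠ c) (hbc : b ≠ c) :
    missingPairs A ≠ {(a, a), (b, b), (c, c)} := by
  intro hmissing
  have hrow := hA.pairMult_add_add_eq_three hab hac hbc
    (by rw [hmissing]; simp [insert_subset_iff])
  have hzero {s : Fin n} (hs : (s, s) ∈ missingPairs A) : pairMult A s s = 0 :=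
    mem_missingPairs.1 hs
  have ha := hrow a
  have hb := hrow b
  have hc := hrow c
  rw [hzero (by simp [hmissing])] at ha hb hc
  rw [pairMult_comm A b a] at hb
  rw [pairMult_comm A c a, pairMult_comm A c b] at hc
  omega

theorem IsLatinSquare.exists_missingPairs_eq_loop_and_edge (hA : IsLatinSquare A)
    (hcard : #(missingPairs A) = 3) :
    ∃ a b c, a ≠ b ∧ a ≠ c ∧ b ≠ c ∧ missingPairs A = {(a, a), (b, c), (c, b)} := by
  have hswap : ∀ p ∈ missingPairs A, p.swap ∈ missingPairs A := fun p hp => by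
    rw [Prod.swap, mem_missingPairs, pairMult_comm]
    exact mem_missingPairs.1 hp
  obtain ⟨a, b, c, hab, hac, hbc, hmissing⟩ | ⟨a, b, c, hbc, hmissing⟩ :=
    exists_eq_of_card_eq_three_of_swap_mem hswap hcard
  · exact absurd hmissing (hA.missingPairs_ne_three_loops hab hac hbc)
  have hzero {s t : Fin n} (hst : (s, t) ∈ missingPairs A) : pairMult A s t = 0 :=
    mem_missingPairs.1 hst
  have haa := hzero (s := a) (t := a) (by simp [hmissing])
  refine ⟨a, b, c, ?_, ?_, hbc, hmissing⟩
  · rintro rfl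
    have hrow := hA.sum_pairMult_eq_card_of_missingPairs_subset (T := {a, c})
      (by rw [hmissing]; simp [insert_subset_iff]) a
    rw [sum_pair hbc, card_pair hbc, haa, hzero (by simp [hmissing])] at hrow
    omega
  · rintro rfl
    have hrow := hA.sum_pairMult_eq_card_of_missingPairs_subset (T := {a, b})
      (by rw [hmissing]; simp [insert_subset_iff]) a
    rw [sum_pair hbc.symm, card_pair hbc.symm, haa, hzero (by simp [hmissing])] at hrow
    omega

theorem IsLatinSquare.exists_pairMult_eq_threeMissingMult (hA : IsLatinSquare A)
    (hcard : #(missingPairs A) = 3) :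
    ∃ a b c, a ≠ b ∧ a ≠ c ∧ b ≠ c ∧ ∀ s t, pairMult A s t = threeMissingMult a b c s t := by
  obtain ⟨a, b, c, hab, hac, hbc, hmissing⟩ := hA.exists_missingPairs_eq_loop_and_edge hcard
  have hzero (s t : Fin n) :
      pairMult A s t = 0 ↔ s = a ∧ t = a ∨ s = b ∧ t = c ∨ s = c ∧ t = b := by
    rw [← mem_missingPairs, hmissing]
    simp
  have hone {s t : Fin n} (hs : s ∉ ({a, b, c} : Finset (Fin n))) : pairMult A s t = 1 :=
    hA.pairMult_eq_one (fun u => by grind) t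
  have hrow := hA.pairMult_add_add_eq_three hab hac hbc
    (by rw [hmissing]; simp [insert_subset_iff])
  have hcomm := pairMult_comm A
  have hvalues : pairMult A a b = 2 ∨ pairMult A a c = 2 := by grind
  rcases hvalues with h | h
  · exact ⟨a, b, c, hab, hac, hbc, fun s t => by grind [threeMissingMult]⟩
  · exact ⟨a, c, b, hac, hab, hbc.symm, fun s t => by grind [threeMissingMult]⟩

end ThreeMissing

section SmallOrders

variable {n : ℕ} {A : Fin n → Fin n → Fin n}

theorem orthCount_notMem_of_search_const_eq_false [NeZero n] (hA : IsLatinSquare A) {B : ℕ}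
    {bad : List ℕ} (hB : ∀ r ∈ bad, n ^ 2 ≤ r + B)
    (hsearch : TransposeSearch.search n (fun _ _ => n) B bad = false) :
    orthCount A (fun i j => A j i) ∉ bad := by
  obtain ⟨σ, τ, -, hnorm⟩ := exists_isNormalized_relabel hA 0 (Equiv.swap 0 (A 0 0))
    (Equiv.swap_apply_left _ _)
  rw [← orthCount_relabel A σ τ]
  have hA' := isLatinSquare_relabel hA σ τ
  exact TransposeSearch.orthCount_notMem_of_search_eq_false hA' hnorm hA'.pairMult_le hB hsearch

theorem orthCount_notMem_of_order_two {A : Fin 2 → Fin 2 → Fin 2} (hA : IsLatinSquare A) :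
    orthCount A (fun i j => A j i) ∉ [4] :=
  orthCount_notMem_of_search_const_eq_false (B := 0) hA (by decide) (by decide +kernel)

theorem orthCount_notMem_of_order_three {A : Fin 3 → Fin 3 → Fin 3} (hA : IsLatinSquare A) :
    orthCount A (fun i j => A j i) ∉ [5, 6, 7, 9] :=
  orthCount_notMem_of_search_const_eq_false (B := 4) hA (by decide) (by decide +kernel)

theorem orthCount_notMem_of_order_four {A : Fin 4 → Fin 4 → Fin 4} (hA : IsLatinSquare A) :
    orthCount A (fun i j => A j i) ∉ [6, 7, 8, 10, 11, 12, 13, 14] :=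
  orthCount_notMem_of_search_const_eq_false (B := 10) hA (by decide) (by decide +kernel)

theorem orthCount_notMem_of_order_five {A : Fin 5 → Fin 5 → Fin 5} (hA : IsLatinSquare A) :
    orthCount A (fun i j => A j i) ∉ [8, 9, 12, 16, 18, 20, 22, 23] :=
  orthCount_notMem_of_search_const_eq_false (B := 17) hA (by decide) (by decide +kernel)

theorem orthCount_notMem_of_order_six {A : Fin 6 → Fin 6 → Fin 6} (hA : IsLatinSquare A) :
    orthCount A (fun i j => A j i) ∉ [32, 33, 34, 36] :=
  orthCount_notMem_of_search_const_eq_false (B := 4) hA (by decide) (by decide +kernel)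

theorem search_seven_eq_false : ∀ c : Fin 7, c ≠ 1 → c ≠ 0 →
    TransposeSearch.search 7 (threeMissingMult 1 0 c) 3 [46] = false := by
  decide +kernel

theorem exists_perm_apply_eq_and_apply_eq {α : Type*} {x y a b : α} (hxy : x ≠ y) (hab : a ≠ b) :
    ∃ τ : Equiv.Perm α, τ x = a ∧ τ y = b :=
  MulAction.is_two_pretransitive_iff.1 (Equiv.Perm.isMultiplyPretransitive α 2) hxy hab

theorem orthCount_ne_of_order_seven {A : Fin 7 → Fin 7 → Fin 7} (hA : IsLatinSquare A) :
    orthCount A (fun i j => A j i) ≠ 46 := by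
  intro h46
  have hcard : #(missingPairs A) = 3 := by
    have := orthCount_add_card_missingPairs A
    omega
  obtain ⟨a, b, c, hab, hac, hbc, hmult⟩ := hA.exists_pairMult_eq_threeMissingMult hcard
  obtain ⟨x, hx⟩ : ∃ x, A x x = b := exists_apply_self_eq <| by
    rw [hmult, threeMissingMult, if_neg (by grind), if_neg (by grind)]
  obtain ⟨τ₀, hτ₀b, hτ₀a⟩ :=
    exists_perm_apply_eq_and_apply_eq (zero_ne_one (α := Fin 7)) hab.symm
  obtain ⟨σ, τ, hτ, hnorm⟩ := exists_isNormalized_relabel hA x τ₀ (hτ₀b.trans hx.symm)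
  obtain rfl : τ 0 = b := (hτ 0 (by decide)).trans hτ₀b
  obtain rfl : τ 1 = a := (hτ 1 (by decide)).trans hτ₀a
  obtain ⟨c, rfl⟩ := τ.surjective c
  refine TransposeSearch.orthCount_notMem_of_search_eq_false (isLatinSquare_relabel hA σ τ) hnorm
    (fun s t => ?_) (by decide)
    (search_seven_eq_false c (by rintro rfl; exact hac rfl) (by rintro rfl; exact hbc rfl))
    (by simp [orthCount_relabel, h46])
  rw [pairMult_relabel, hmult, threeMissingMult_apply]

end SmallOrders

theorem r_self_orthogonal_necessary (n : ℕ) (hn : 1 ≤ n) (r : ℕ)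
    (h : ∃ A : Fin n → Fin n → Fin n,
        IsLatinSquare A ∧ orthCount A (fun i j => A j i) = r) :
    n ≤ r ∧ r ≤ n ^ 2 ∧ r ≠ n + 1 ∧ r ≠ n ^ 2 - 1 ∧
      (n, r) ∉ ({(2, 4), (3, 5), (3, 6), (3, 7), (3, 9), (4, 6), (4, 7), (4, 8), (4, 10),
        (4, 11), (4, 12), (4, 13), (4, 14), (5, 8), (5, 9), (5, 12), (5, 16), (5, 18),
        (5, 20), (5, 22), (5, 23), (6, 32), (6, 33), (6, 34), (6, 36), (7, 46)} :
        Set (ℕ × ℕ)) := by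
  obtain ⟨A, hA, rfl⟩ := h
  have hsum := orthCount_add_card_missingPairs A
  have hmissing := hA.card_missingPairs_ne_one
  have hpos : 0 < n ^ 2 := by positivity
  refine ⟨hA.le_orthCount, by omega, hA.orthCount_ne_succ, by omega, fun hmem => ?_⟩
  simp only [Set.mem_insert_iff, Set.mem_singleton_iff, Prod.mk.injEq] at hmem
  obtain ⟨hn2, hn7⟩ : 2 ≤ n ∧ n ≤ 7 := by grind (splits := 30)
  interval_cases n
  · exact orthCount_notMem_of_order_two hA (by simpa using hmem)
  · exact orthCount_notMem_of_order_three hA (by simpa using hmem)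
  · exact orthCount_notMem_of_order_four hA (by simpa using hmem)
  · exact orthCount_notMem_of_order_five hA (by simpa using hmem)
  · exact orthCount_notMem_of_order_six hA (by simpa using hmem)
  · exact orthCount_ne_of_order_seven hA (by simpa using hmem)
end

section
/- For every positive integer n with n ∉ {2, 3, 6}, there exists a self-orthogonal Latin square of order n, i.e., a Latin square A of order n such that A and its transpose Aᵀ are orthogonal. -/
/-!
Orders coprime to six are covered by the linear square `2 y - x` on `ZMod m`. Self-orthogonal
squares can be multiplied, and, since their diagonals are transversals, they can be made idempotent
and glued along the blocks of a pairwise balanced design. The design used here is the transversal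
design of the lines `j ↦ b + c j * s`, with `c 0, …, c 4` in a ring where the differences
`c i - c j` are units, and with the last of its five groups truncated to `t` points: its blocks have
sizes `4` and `5` and its groups sizes `m` and `t`. Hence order `t ≤ m` yields order `4 m + t` for
all `m` coprime to six, and induction leaves finitely many orders. These come from finite fields,
products, truncated designs over finite fields, and squares over `ZMod g` that are invariant under
translation up to the prolongation of a few diagonals.
-/

/-- A self-orthogonal Latin square with rows, columns and symbols indexed by `α`, written as a
binary operation. -/
structure IsSelfOrthogonal {α : Type*} (A : α → α → α) : Prop where
  row : ∀ x, Function.Bijective (A x)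
  col : ∀ y, Function.Bijective fun x => A x y
  orth : Function.Bijective fun p : α × α => (A p.1 p.2, A p.2 p.1)

/-- There is a self-orthogonal Latin square (SOLS) indexed by `α`. -/
def HasSOLS (α : Type*) : Prop :=
  ∃ A : α → α → α, IsSelfOrthogonal A

section Basic

variable {α β : Type*}

theorem IsSelfOrthogonal.of_surjective [Finite α] {A : α → α → α}
    (row : ∀ x z, ∃ y, A x y = z) (col : ∀ y z, ∃ x, A x y = z)
    (orth : ∀ z w, ∃ x y, A x y = z ∧ A y x = w) : IsSelfOrthogonal A where
  row x := Function.Surjective.bijective_of_finite (row x)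
  col y := Function.Surjective.bijective_of_finite (col y)
  orth := Function.Surjective.bijective_of_finite fun ⟨z, w⟩ =>
    let ⟨x, y, hz, hw⟩ := orth z w
    ⟨(x, y), Prod.ext hz hw⟩

theorem IsSelfOrthogonal.exists_eq_and_eq {A : α → α → α} (hA : IsSelfOrthogonal A) (z w : α) :
    ∃ x y, A x y = z ∧ A y x = w :=
  let ⟨⟨x, y⟩, h⟩ := hA.orth.surjective (z, w)
  ⟨x, y, congrArg Prod.fst h, congrArg Prod.snd h⟩

theorem HasSOLS.congr (e : α ≃ β) : HasSOLS α → HasSOLS β := by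
  rintro ⟨A, hA⟩
  exact ⟨fun x y => e (A (e.symm x) (e.symm y)),
    fun x => e.bijective.comp ((hA.row (e.symm x)).comp e.symm.bijective),
    fun y => e.bijective.comp ((hA.col (e.symm y)).comp e.symm.bijective),
    (e.prodCongr e).bijective.comp (hA.orth.comp (e.prodCongr e).symm.bijective)⟩

theorem HasSOLS.of_card_eq [Finite α] [Finite β] (h : Nat.card α = Nat.card β) :
    HasSOLS α → HasSOLS β :=
  .congr ((Finite.equivFin α).trans ((finCongr h).trans (Finite.equivFin β).symm))

theorem HasSOLS.of_subsingleton [Subsingleton α] : HasSOLS α :=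
  ⟨fun x _ => x, .of_surjective (fun x _ => ⟨x, Subsingleton.elim _ _⟩)
    (fun y _ => ⟨y, Subsingleton.elim _ _⟩) fun z w => ⟨z, w, rfl, Subsingleton.elim _ _⟩⟩

theorem HasSOLS.prod (hα : HasSOLS α) (hβ : HasSOLS β) : HasSOLS (α × β) := by
  obtain ⟨A, hA⟩ := hα
  obtain ⟨B, hB⟩ := hβ
  let e := Equiv.prodProdProdComm α β α β
  exact ⟨fun x y => (A x.1 y.1, B x.2 y.2),
    fun x => (hA.row x.1).prodMap (hB.row x.2), fun y => (hA.col y.1).prodMap (hB.col y.2),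
    e.symm.bijective.comp ((hA.orth.prodMap hB.orth).comp e.bijective)⟩

theorem HasSOLS.fin_mul {m n : ℕ} (hm : HasSOLS (Fin m)) (hn : HasSOLS (Fin n)) :
    HasSOLS (Fin (m * n)) :=
  (hm.prod hn).congr finProdFinEquiv

/-- A cell and its transpose that show the same symbol are, by orthogonality, the same cell. -/
theorem IsSelfOrthogonal.bijective_diagonal {A : α → α → α} (hA : IsSelfOrthogonal A) :
    Function.Bijective fun x => A x x := by
  refine ⟨fun x y h => congrArg Prod.fst (hA.orth.injective (a₁ := (x, x)) (a₂ := (y, y))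
    (Prod.ext h h)), fun z => ?_⟩
  obtain ⟨x, y, hxy, hyx⟩ := hA.exists_eq_and_eq z z
  obtain rfl : x = y := congrArg Prod.fst (hA.orth.injective (a₁ := (x, y)) (a₂ := (y, x))
    (Prod.ext (hxy.trans hyx.symm) (hyx.trans hxy.symm)))
  exact ⟨x, hxy⟩

theorem HasSOLS.exists_idempotent (h : HasSOLS α) :
    ∃ A : α → α → α, IsSelfOrthogonal A ∧ ∀ x, A x x = x := by
  obtain ⟨A, hA⟩ := h
  let σ := Equiv.ofBijective _ hA.bijective_diagonal
  exact ⟨fun x y => σ.symm (A x y),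
    ⟨fun x => σ.symm.bijective.comp (hA.row x), fun y => σ.symm.bijective.comp (hA.col y),
      (σ.symm.prodCongr σ.symm).bijective.comp hA.orth⟩, σ.symm_apply_apply⟩

end Basic

section PairwiseBalanced

variable {P I J R : Type*}

/-- The sets `B i` are the blocks of a pairwise balanced design of index one on `P`. -/
def IsPairwiseBalanced (B : I → Set P) : Prop :=
  ∀ x y, x ≠ y → ∃! i, x ∈ B i ∧ y ∈ B i

/-- Idempotent operations on the blocks agree on the diagonal, which is all that two blocks can
share. -/
theorem IsPairwiseBalanced.exists_glue {B : I → Set P} (hB : IsPairwiseBalanced B)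
    (A : ∀ i, B i → B i → B i) (hA : ∀ i x, A i x x = x) :
    ∃ M : P → P → P, (∀ x, M x x = x) ∧ ∀ i (x y : B i), M x y = A i x y := by
  classical
  choose b hb hb_unique using fun x y h => hB x y h
  refine ⟨fun x y => if h : x = y then x else A (b x y h) ⟨x, (hb x y h).1⟩ ⟨y, (hb x y h).2⟩,
    fun x => dif_pos rfl, ?_⟩
  rintro i ⟨x, hx⟩ ⟨y, hy⟩
  by_cases h : x = y
  · subst h
    exact (dif_pos rfl).trans (congrArg Subtype.val (hA i ⟨x, hx⟩)).symm
  · obtain rfl : i = b x y h := hb_unique x y h i ⟨hx, hy⟩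
    exact dif_neg h

theorem HasSOLS.of_isPairwiseBalanced [Finite P] {B : I → Set P} (hB : IsPairwiseBalanced B)
    (h : ∀ i, HasSOLS (B i)) : HasSOLS P := by
  choose A hA hA_idem using fun i => (h i).exists_idempotent
  obtain ⟨M, hM_idem, hM⟩ := hB.exists_glue A hA_idem
  have exists_block {x y : P} (hxy : x ≠ y) : ∃ i, x ∈ B i ∧ y ∈ B i := (hB x y hxy).exists
  refine ⟨M, .of_surjective (fun x z => ?_) (fun y z => ?_) fun z w => ?_⟩
  · obtain rfl | hxz := eq_or_ne x z
    · exact ⟨x, hM_idem x⟩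
    obtain ⟨i, hx, hz⟩ := exists_block hxz
    obtain ⟨y, hy⟩ := (hA i).row ⟨x, hx⟩ |>.surjective ⟨z, hz⟩
    exact ⟨y, (hM i ⟨x, hx⟩ y).trans (congrArg Subtype.val hy)⟩
  · obtain rfl | hyz := eq_or_ne y z
    · exact ⟨y, hM_idem y⟩
    obtain ⟨i, hy, hz⟩ := exists_block hyz
    obtain ⟨x, hx⟩ := (hA i).col ⟨y, hy⟩ |>.surjective ⟨z, hz⟩
    exact ⟨x, (hM i x ⟨y, hy⟩).trans (congrArg Subtype.val hx)⟩
  · obtain rfl | hzw := eq_or_ne z w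
    · exact ⟨z, z, hM_idem z, hM_idem z⟩
    obtain ⟨i, hz, hw⟩ := exists_block hzw
    obtain ⟨x, y, hxy, hyx⟩ := (hA i).exists_eq_and_eq ⟨z, hz⟩ ⟨w, hw⟩
    exact ⟨x, y, (hM i x y).trans (congrArg Subtype.val hxy),
      (hM i y x).trans (congrArg Subtype.val hyx)⟩

theorem existsUnique_line [CommRing R] {c : J → R} {i j : J} (hc : IsUnit (c i - c j)) (x y : R) :
    ∃! p : R × R, x = p.1 + c i * p.2 ∧ y = p.1 + c j * p.2 := by
  obtain ⟨u, hu⟩ := hc.exists_left_inv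
  refine ⟨(x - c i * (u * (x - y)), u * (x - y)), ⟨by ring, ?_⟩, ?_⟩
  · linear_combination (x - y) * hu
  · rintro ⟨b, s⟩ ⟨hx, hy⟩
    have hs : s = u * (x - y) := by linear_combination -s * hu + u * (hy - hx)
    exact Prod.ext (by linear_combination -c i * hs - hx) hs

/-- With `S j = univ` this is a transversal design whose groups are the fibres of the sigma type;
smaller sets `S j` truncate its groups. -/
theorem isPairwiseBalanced_lines [CommRing R] {c : J → R}
    (hc : Pairwise fun i j => IsUnit (c i - c j)) (S : J → Set R) :
    IsPairwiseBalanced (P := Σ j, S j) (Sum.elim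
      (fun p : R × R => {x | x.2 = p.1 + c x.1 * p.2}) fun j => {x | x.1 = j}) := by
  rintro ⟨i, x⟩ ⟨j, y⟩ hne
  obtain rfl | hij := eq_or_ne i j
  · refine ⟨.inr i, ⟨rfl, rfl⟩, ?_⟩
    rintro (p | k) ⟨hx, hy⟩
    · exact absurd (congrArg (Sigma.mk i) (Subtype.ext (hx.trans hy.symm))) hne
    · exact congrArg _ hx.symm
  · obtain ⟨p, hp, hp_unique⟩ := existsUnique_line (hc hij) (x : R) y
    refine ⟨.inl p, hp, ?_⟩
    rintro (q | k) ⟨hx, hy⟩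
    · exact congrArg _ (hp_unique q ⟨hx, hy⟩)
    · exact absurd (hx.trans hy.symm) hij

theorem HasSOLS.sigma_of_lines [Finite J] [CommRing R] [Finite R] {c : J → R}
    (hc : Pairwise fun i j => IsUnit (c i - c j)) {S : J → Set R} (hS : ∀ j, HasSOLS (S j))
    (hline : ∀ b s, HasSOLS {j // b + c j * s ∈ S j}) : HasSOLS (Σ j, S j) := by
  refine .of_isPairwiseBalanced (isPairwiseBalanced_lines hc S) ?_
  rintro (⟨b, s⟩ | j)
  · let e : {j // b + c j * s ∈ S j} ≃ {x : Σ j, S j // (x.2 : R) = b + c x.1 * s} :=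
      { toFun := fun j => ⟨⟨j, _, j.2⟩, rfl⟩
        invFun := fun x => ⟨x.1.1, x.2 ▸ x.1.2.2⟩
        left_inv := fun _ => rfl
        right_inv := fun x => Subtype.ext (Sigma.ext rfl (heq_of_eq (Subtype.ext x.2.symm))) }
    exact (hline b s).congr e
  · exact (hS j).congr (Equiv.sigmaSubtype j).symm

theorem HasSOLS.fin_truncated [CommRing R] [Finite R] {k t : ℕ} {c : Fin (k + 1) → R}
    (hc : Pairwise fun i j => IsUnit (c i - c j)) (ht : t ≤ Nat.card R) (hk : HasSOLS (Fin k))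
    (hk' : HasSOLS (Fin (k + 1))) (hR : HasSOLS R) (hT : HasSOLS (Fin t)) :
    HasSOLS (Fin (k * Nat.card R + t)) := by
  obtain ⟨T, -, rfl⟩ := Set.exists_subset_card_eq (s := (Set.univ : Set R)) (n := t)
    (by rwa [Set.ncard_univ])
  let S : Fin (k + 1) → Set R := Fin.snoc (α := fun _ => Set R) (fun _ => Set.univ) T
  have hS_castSucc (j : Fin k) : S j.castSucc = Set.univ := Fin.snoc_castSucc ..
  have hS_last : S (Fin.last k) = T := Fin.snoc_last ..
  have hS : ∀ j, HasSOLS (S j) := by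
    refine Fin.lastCases ?_ fun j => ?_
    · rw [hS_last]
      exact hT.of_card_eq (Nat.card_fin _)
    · rw [hS_castSucc]
      exact hR.congr (Equiv.Set.univ R).symm
  have hline (b s) : HasSOLS {j // b + c j * s ∈ S j} := by
    by_cases hlast : b + c (Fin.last k) * s ∈ T
    · refine hk'.congr (Equiv.subtypeUnivEquiv (Fin.lastCases ?_ fun j => ?_)).symm
      · rwa [hS_last]
      · rw [hS_castSucc]
        trivial
    · refine hk.congr ((Equiv.ofInjective _ (Fin.castSucc_injective k)).trans
        (Equiv.subtypeEquivRight (Fin.lastCases ?_ fun j => ?_)))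
      · simp [hS_last, hlast]
      · simp [hS_castSucc]
  refine (HasSOLS.sigma_of_lines hc hS hline).of_card_eq ?_
  simp [Nat.card_sigma, Fin.sum_univ_castSucc, hS_castSucc, hS_last]

end PairwiseBalanced

section Prolongation

variable {G : Type*} [AddCommGroup G] {L : G → G} {D : Set G} [DecidablePred (· ∈ D)]

/-- `L` is a starter row for developing a self-orthogonal Latin square over the group `G`: the
square `(i, j) ↦ i + L (j - i)` becomes self-orthogonal once its diagonals `j - i = d`, for `d ∈ D`,
are moved to new rows and columns as in `prolongation`. The map in `surjective_orth` is the
difference of the symbols in a cell and in its transpose: `d + L (-d) - L d` for the cell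
`(i, i + d)` and its transpose if both remain in place, and `± d` for the cells of a moved
diagonal. -/
structure IsStarter (L : G → G) (D : Set G) [DecidablePred (· ∈ D)] : Prop where
  surjective : Function.Surjective L
  surjective_sub : Function.Surjective fun d => L d - d
  neg_notMem : ∀ d ∈ D, -d ∉ D
  surjective_orth :
    Function.Surjective fun d => if d ∈ D ∨ -d ∈ D then d else d + L (-d) - L d

instance [Fintype G] [DecidableEq G] : Decidable (IsStarter L D) :=
  decidable_of_iff (Function.Surjective L ∧ (Function.Surjective fun d => L d - d) ∧
      (∀ d, d ∈ D → -d ∉ D) ∧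
      Function.Surjective fun d => if d ∈ D ∨ -d ∈ D then d else d + L (-d) - L d)
    ⟨fun ⟨h₁, h₂, h₃, h₄⟩ => ⟨h₁, h₂, h₃, h₄⟩, fun ⟨h₁, h₂, h₃, h₄⟩ => ⟨h₁, h₂, h₃, h₄⟩⟩

/-- The prolongation of the square `(i, j) ↦ i + L (j - i)`: the entries of the diagonal
`j - i = d`, for `d ∈ D`, are projected to a new row and a new column and replaced by the new symbol
`d`, and the cells between new rows and new columns are filled with `C`. -/
def prolongation (L : G → G) (D : Set G) [DecidablePred (· ∈ D)] (C : D → D → D) :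
    G ⊕ D → G ⊕ D → G ⊕ D
  | .inl i, .inl j => if h : j - i ∈ D then .inr ⟨j - i, h⟩ else .inl (i + L (j - i))
  | .inl i, .inr d => .inl (i + L d)
  | .inr d, .inl j => .inl (j - d + L d)
  | .inr d, .inr e => .inr (C d e)

variable {C : D → D → D}

theorem prolongation_inl_inl_of_mem {i j d : G} (hd : d ∈ D) (hj : i + d = j) :
    prolongation L D C (.inl i) (.inl j) = .inr ⟨d, hd⟩ := by
  subst hj
  simp [prolongation, hd]

theorem prolongation_inl_inl_of_notMem {i j k d : G} (hd : d ∉ D) (hj : i + d = j)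
    (hk : i + L d = k) : prolongation L D C (.inl i) (.inl j) = .inl k := by
  subst hj hk
  simp [prolongation, hd]

theorem IsStarter.exists_row (h : IsStarter L D) (hC : IsSelfOrthogonal C) (x z : G ⊕ D) :
    ∃ y, prolongation L D C x y = z := by
  rcases x with i | d <;> rcases z with k | e
  · obtain ⟨d, hd⟩ := h.surjective (k - i)
    have hk : i + L d = k := by rw [hd, add_sub_cancel]
    by_cases hdD : d ∈ D
    · exact ⟨.inr ⟨d, hdD⟩, congrArg Sum.inl hk⟩
    · exact ⟨.inl (i + d), prolongation_inl_inl_of_notMem hdD rfl hk⟩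
  · exact ⟨.inl (i + e), prolongation_inl_inl_of_mem e.2 rfl⟩
  · exact ⟨.inl (k + d - L d), congrArg Sum.inl (by abel)⟩
  · obtain ⟨y, hy⟩ := (hC.row d).surjective e
    exact ⟨.inr y, congrArg Sum.inr hy⟩

theorem IsStarter.exists_col (h : IsStarter L D) (hC : IsSelfOrthogonal C) (y z : G ⊕ D) :
    ∃ x, prolongation L D C x y = z := by
  rcases y with j | d <;> rcases z with k | e
  · obtain ⟨d, hd : L d - d = k - j⟩ := h.surjective_sub (k - j)
    have hk : j - d + L d = k := by rw [sub_add_eq_add_sub, add_sub_assoc, hd, add_sub_cancel]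
    by_cases hdD : d ∈ D
    · exact ⟨.inr ⟨d, hdD⟩, congrArg Sum.inl hk⟩
    · exact ⟨.inl (j - d), prolongation_inl_inl_of_notMem hdD (sub_add_cancel j d) hk⟩
  · exact ⟨.inl (j - e), prolongation_inl_inl_of_mem e.2 (sub_add_cancel j e.1)⟩
  · exact ⟨.inl (k - L d), congrArg Sum.inl (sub_add_cancel k (L d))⟩
  · obtain ⟨x, hx⟩ := (hC.col d).surjective e
    exact ⟨.inr x, congrArg Sum.inr hx⟩

theorem IsStarter.exists_orth_inl (h : IsStarter L D) (k l : G) :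
    ∃ x y, prolongation L D C x y = .inl k ∧ prolongation L D C y x = .inl l := by
  obtain ⟨d, hd : ite _ _ _ = l - k⟩ := h.surjective_orth (l - k)
  split_ifs at hd with hD
  · obtain rfl : k + d = l := by rw [hd, add_sub_cancel]
    obtain hD | hD := hD
    · exact ⟨.inr ⟨d, hD⟩, .inl (k + d - L d), congrArg Sum.inl (by abel),
        congrArg Sum.inl (by abel)⟩
    · exact ⟨.inl (k - L (-d)), .inr ⟨-d, hD⟩, congrArg Sum.inl (by abel),
        congrArg Sum.inl (by rw [sub_neg_eq_add]; abel)⟩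
  · obtain ⟨hD, hD'⟩ := not_or.mp hD
    have hl : k - L d + d + L (-d) = l := by rw [← add_sub_cancel k l, ← hd]; abel
    exact ⟨.inl (k - L d), .inl (k - L d + d),
      prolongation_inl_inl_of_notMem hD rfl (sub_add_cancel k (L d)),
      prolongation_inl_inl_of_notMem hD' (add_neg_cancel_right _ d) hl⟩

theorem IsStarter.exists_orth_inl_inr (h : IsStarter L D) (k : G) (d : D) :
    ∃ x y, prolongation L D C x y = .inl k ∧ prolongation L D C y x = .inr d :=
  ⟨.inl (k - L (-d)), .inl (k - L (-d) + -d),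
    prolongation_inl_inl_of_notMem (h.neg_notMem d d.2) rfl (sub_add_cancel k (L (-d))),
    prolongation_inl_inl_of_mem d.2 (neg_add_cancel_right _ d.1)⟩

theorem IsStarter.hasSOLS_sum [Finite G] (h : IsStarter L D) (hD : HasSOLS D) :
    HasSOLS (G ⊕ D) := by
  obtain ⟨C, hC⟩ := hD
  refine ⟨prolongation L D C, .of_surjective (h.exists_row hC) (h.exists_col hC) ?_⟩
  rintro (k | d) (l | e)
  · exact h.exists_orth_inl k l
  · exact h.exists_orth_inl_inr k e
  · obtain ⟨x, y, hxy, hyx⟩ := h.exists_orth_inl_inr (C := C) l d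
    exact ⟨y, x, hyx, hxy⟩
  · obtain ⟨x, y, hxy, hyx⟩ := hC.exists_eq_and_eq d e
    exact ⟨.inr x, .inr y, congrArg Sum.inr hxy, congrArg Sum.inr hyx⟩

theorem IsStarter.hasSOLS [Finite G] (h : IsStarter L ∅) : HasSOLS G :=
  (h.hasSOLS_sum .of_subsingleton).congr (Equiv.sumEmpty G _)

end Prolongation

section Linear

theorem isStarter_mul_left {R : Type*} [CommRing R] {a : R} (ha : IsUnit a) (ha' : IsUnit (a - 1))
    (ha'' : IsUnit (1 - 2 * a)) : IsStarter (a * ·) (∅ : Set R) where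
  surjective := (IsUnit.isUnit_iff_mulLeft_bijective.mp ha).surjective
  surjective_sub := by
    simpa only [sub_one_mul] using (IsUnit.isUnit_iff_mulLeft_bijective.mp ha').surjective
  neg_notMem _ h := absurd h (Set.notMem_empty _)
  surjective_orth := by
    convert (IsUnit.isUnit_iff_mulLeft_bijective.mp ha'').surjective using 2 with d
    simp only [Set.mem_empty_iff_false, or_self, if_false]
    ring

theorem isUnit_intCast_of_dvd {m : ℕ} (hm : m.Coprime 6) {z : ℤ} (hz : z ∣ 36) :
    IsUnit (z : ZMod m) := by
  have h36 : IsUnit ((36 : ℕ) : ZMod m) :=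
    (ZMod.isUnit_iff_coprime 36 m).mpr (hm.pow_right 2).symm
  have hdvd : (z : ZMod m) ∣ (36 : ℕ) := by simpa using map_dvd (Int.castRingHom (ZMod m)) hz
  exact isUnit_of_dvd_unit hdvd h36

theorem HasSOLS.zmod_of_coprime_six {m : ℕ} (hm : m.Coprime 6) : HasSOLS (ZMod m) := by
  have : NeZero m := ⟨by rintro rfl; norm_num at hm⟩
  have hunit (z : ℤ) (hz : z ∣ 36) := isUnit_intCast_of_dvd hm hz
  refine (isStarter_mul_left (a := (2 : ZMod m)) ?_ ?_ ?_).hasSOLS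
  · exact_mod_cast hunit 2 (by norm_num)
  · norm_num
  · convert hunit (-3) (by norm_num)
    norm_num

theorem HasSOLS.fin_of_coprime_six {m : ℕ} (hm : m.Coprime 6) : HasSOLS (Fin m) := by
  have : NeZero m := ⟨by rintro rfl; norm_num at hm⟩
  exact (HasSOLS.zmod_of_coprime_six hm).of_card_eq (by simp)

theorem HasSOLS.of_field {F : Type*} [Field F] [Finite F] (hF : 4 ≤ Nat.card F) : HasSOLS F := by
  classical
  have := Fintype.ofFinite F
  obtain ⟨a, ha⟩ : ∃ a : F, a ∉ ({0, 1, 2⁻¹} : Finset F) := by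
    by_contra! h
    rw [Nat.card_eq_fintype_card] at hF
    have := (Finset.card_le_card (fun a _ => h a : Finset.univ ⊆ _)).trans Finset.card_le_three
    rw [Finset.card_univ] at this
    omega
  simp only [Finset.mem_insert, Finset.mem_singleton, not_or] at ha
  obtain ⟨h0, h1, h2⟩ := ha
  have h2' : 1 - 2 * a ≠ 0 := sub_ne_zero.mpr fun h => h2 (eq_inv_of_mul_eq_one_right h.symm)
  exact (isStarter_mul_left (.mk0 a h0) (.mk0 _ (sub_ne_zero.mpr h1)) (.mk0 _ h2')).hasSOLS

theorem HasSOLS.fin_of_isPrimePow {q : ℕ} (hq : IsPrimePow q) (hq4 : 4 ≤ q) : HasSOLS (Fin q) := by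
  obtain ⟨_⟩ : Nonempty (Field (Fin q)) := Fintype.nonempty_field_iff.mpr (by simpa)
  exact .of_field (by simpa)

end Linear

section TruncatedDesigns

theorem HasSOLS.fin_four : HasSOLS (Fin 4) :=
  .fin_of_isPrimePow (Nat.prime_two.isPrimePow.pow two_ne_zero) le_rfl

theorem HasSOLS.fin_five : HasSOLS (Fin 5) :=
  .fin_of_coprime_six (by norm_num)

theorem HasSOLS.fin_four_mul_card_add {F : Type*} [Field F] [Finite F] (hF : 5 ≤ Nat.card F)
    {t : ℕ} (htF : t ≤ Nat.card F) (ht : HasSOLS (Fin t)) :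
    HasSOLS (Fin (4 * Nat.card F + t)) := by
  let c : Fin 5 → F := (Finite.equivFin F).symm ∘ Fin.castLE hF
  have c_injective : Function.Injective c :=
    (Finite.equivFin F).symm.injective.comp (Fin.castLE_injective hF)
  exact .fin_truncated (c := c) (fun i j hij => .mk0 _ (sub_ne_zero.mpr (c_injective.ne hij)))
    htF fin_four fin_five (.of_field (by omega)) ht

theorem HasSOLS.fin_four_mul_add_of_isPrimePow {q t : ℕ} (hq : IsPrimePow q) (hq5 : 5 ≤ q)
    (htq : t ≤ q) (ht : HasSOLS (Fin t)) : HasSOLS (Fin (4 * q + t)) := by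
  obtain ⟨_⟩ : Nonempty (Field (Fin q)) := Fintype.nonempty_field_iff.mpr (by simpa)
  simpa using HasSOLS.fin_four_mul_card_add (F := Fin q) (by simpa) (by simpa) ht

theorem HasSOLS.fin_four_mul_add_of_coprime_six {m t : ℕ} (hm : m.Coprime 6) (htm : t ≤ m)
    (ht : HasSOLS (Fin t)) : HasSOLS (Fin (4 * m + t)) := by
  have : NeZero m := ⟨by rintro rfl; norm_num at hm⟩
  have hdvd : ∀ i j : Fin 5, i ≠ j → (i : ℤ) - j ∣ 36 := by decide
  have hc : Pairwise fun i j : Fin 5 => IsUnit ((i : ℕ) - (j : ℕ) : ZMod m) := fun i j hij => by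
    exact_mod_cast isUnit_intCast_of_dvd hm (hdvd i j hij)
  simpa using HasSOLS.fin_truncated hc (by simpa) fin_four fin_five (.zmod_of_coprime_six hm) ht

end TruncatedDesigns

section Tables

/-- The self-map of `ZMod g` with values `T` at `0, …, g - 1`. -/
def ofTable (g : ℕ) (T : List ℕ) (d : ZMod g) : ZMod g :=
  (T.getD d.val 0 : ℕ)

/-- The residues `1, …, k` modulo `g`. -/
def initialSegment (g k : ℕ) : Set (ZMod g) :=
  {d | 1 ≤ d.val ∧ d.val ≤ k}

instance (g k : ℕ) : DecidablePred (· ∈ initialSegment g k) :=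
  fun d => inferInstanceAs (Decidable (1 ≤ d.val ∧ d.val ≤ k))

theorem card_initialSegment {g k : ℕ} (hk : k < g) : Nat.card (initialSegment g k) = k := by
  have : NeZero g := ⟨hk.ne_bot⟩
  have himage : ZMod.val '' initialSegment g k = Set.Icc 1 k := by
    ext d
    refine ⟨fun ⟨_, hx, hd⟩ => hd ▸ hx, fun hd => ?_⟩
    have hval : (d : ZMod g).val = d := ZMod.val_cast_of_lt (hd.2.trans_lt hk)
    exact ⟨d, by rwa [initialSegment, Set.mem_ofPred_eq, hval], hval⟩
  rw [← Nat.card_image_of_injective (ZMod.val_injective g), himage]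
  simp

theorem HasSOLS.fin_of_table {g k : ℕ} [NeZero g] (T : List ℕ) (hkg : k < g)
    (hk : HasSOLS (Fin k)) (hT : IsStarter (ofTable g T) (initialSegment g k)) :
    HasSOLS (Fin (g + k)) := by
  have hcard := card_initialSegment hkg
  refine (hT.hasSOLS_sum (hk.of_card_eq ?_)).of_card_eq ?_
  · rw [hcard, Nat.card_fin]
  · rw [Nat.card_sum, hcard, Nat.card_zmod, Nat.card_fin]

-- The tables below were found by simulated annealing.
theorem HasSOLS.fin_10 : HasSOLS (Fin 10) :=
  .fin_of_table (g := 9) (k := 1)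
    [0, 7, 1, 6, 5, 3, 8, 2, 4]
    (by norm_num) (.fin_of_coprime_six (by norm_num)) (by decide +kernel)

theorem HasSOLS.fin_12 : HasSOLS (Fin 12) :=
  .fin_of_table (g := 11) (k := 1)
    [0, 5, 3, 10, 1, 7, 9, 6, 2, 4, 8]
    (by norm_num) (.fin_of_coprime_six (by norm_num)) (by decide +kernel)

theorem HasSOLS.fin_14 : HasSOLS (Fin 14) :=
  .fin_of_table (g := 13) (k := 1)
    [0, 10, 8, 2, 7, 6, 3, 1, 12, 11, 5, 9, 4]
    (by norm_num) (.fin_of_coprime_six (by norm_num)) (by decide +kernel)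

theorem HasSOLS.fin_15 : HasSOLS (Fin 15) :=
  .fin_of_table (g := 15) (k := 0)
    [0, 14, 3, 5, 13, 11, 2, 10, 12, 8, 7, 1, 4, 6, 9]
    (by norm_num) .of_subsingleton (by decide +kernel)

theorem HasSOLS.fin_18 : HasSOLS (Fin 18) :=
  .fin_of_table (g := 17) (k := 1)
    [0, 6, 14, 9, 7, 1, 10, 4, 2, 16, 11, 13, 3, 5, 12, 8, 15]
    (by norm_num) (.fin_of_coprime_six (by norm_num)) (by decide +kernel)

theorem HasSOLS.fin_22 : HasSOLS (Fin 22) :=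
  .fin_of_table (g := 17) (k := 5)
    [0, 2, 8, 5, 15, 10, 13, 16, 6, 4, 1, 14, 11, 9, 7, 12, 3]
    (by norm_num) (.fin_of_coprime_six (by norm_num)) (by decide +kernel)

theorem HasSOLS.fin_26 : HasSOLS (Fin 26) :=
  .fin_of_table (g := 19) (k := 7)
    [0, 17, 11, 1, 10, 15, 8, 2, 4, 14, 13, 5, 16, 12, 6, 3, 9, 18, 7]
    (by norm_num) (.fin_of_coprime_six (by norm_num)) (by decide +kernel)

theorem HasSOLS.fin_30 : HasSOLS (Fin 30) :=
  .fin_of_table (g := 23) (k := 7)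
    [0, 9, 6, 13, 22, 16, 15, 3, 2, 21, 8, 14, 17, 10, 4, 7, 18, 1, 11, 20, 19, 12, 5]
    (by norm_num) (.fin_of_coprime_six (by norm_num)) (by decide +kernel)

theorem HasSOLS.fin_34 : HasSOLS (Fin 34) :=
  .fin_of_table (g := 27) (k := 7)
    [0, 23, 16, 14, 3, 25, 4, 1, 18, 21, 6, 19, 15, 10, 5, 20, 17, 9, 24, 26, 22, 7, 11, 13,
      12, 2, 8]
    (by norm_num) (.fin_of_coprime_six (by norm_num)) (by decide +kernel)

theorem HasSOLS.fin_38 : HasSOLS (Fin 38) :=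
  .fin_of_table (g := 33) (k := 5)
    [0, 30, 12, 23, 27, 14, 20, 2, 21, 31, 13, 10, 24, 18, 6, 22, 9, 8, 1, 5, 17, 19, 7, 25,
      32, 29, 4, 28, 16, 11, 3, 15, 26]
    (by norm_num) (.fin_of_coprime_six (by norm_num)) (by decide +kernel)

theorem HasSOLS.fin_42 : HasSOLS (Fin 42) :=
  .fin_of_table (g := 35) (k := 7)
    [0, 29, 5, 12, 6, 24, 21, 30, 16, 13, 8, 3, 32, 34, 25, 2, 23, 18, 14, 33, 1, 31, 11, 28,
      15, 22, 20, 26, 10, 19, 7, 9, 27, 4, 17]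
    (by norm_num) (.fin_of_coprime_six (by norm_num)) (by decide +kernel)

theorem HasSOLS.fin_46 : HasSOLS (Fin 46) :=
  .fin_of_table (g := 39) (k := 7)
    [0, 38, 37, 14, 33, 22, 18, 1, 24, 15, 32, 19, 7, 17, 3, 12, 34, 2, 25, 10, 21, 30, 36, 26,
      11, 6, 28, 13, 27, 9, 35, 5, 8, 4, 16, 23, 20, 29, 31]
    (by norm_num) (.fin_of_coprime_six (by norm_num)) (by decide +kernel)

theorem HasSOLS.fin_58 : HasSOLS (Fin 58) :=
  .fin_of_table (g := 47) (k := 11)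
    [0, 36, 43, 18, 2, 13, 11, 8, 12, 39, 7, 3, 31, 4, 34, 28, 37, 27, 29, 22, 46, 30, 6, 16,
      10, 5, 25, 44, 17, 24, 42, 45, 1, 40, 19, 41, 38, 14, 9, 35, 15, 23, 32, 21, 20, 26, 33]
    (by norm_num) (.fin_of_coprime_six (by norm_num)) (by decide +kernel)

theorem HasSOLS.fin_66 : HasSOLS (Fin 66) :=
  .fin_of_table (g := 53) (k := 13)
    [0, 5, 38, 52, 50, 24, 11, 31, 33, 44, 39, 19, 13, 1, 6, 4, 14, 47, 35, 26, 48, 42, 40, 17,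
      30, 12, 23, 29, 9, 45, 20, 51, 46, 43, 37, 34, 49, 16, 18, 8, 2, 36, 27, 21, 28, 15, 32,
      3, 7, 22, 41, 25, 10]
    (by norm_num) (.fin_of_coprime_six (by norm_num)) (by decide +kernel)

end Tables

section Orders

/-- The orders not covered by `HasSOLS.fin_of_coprime_six` or, inductively, by
`HasSOLS.fin_four_mul_add_of_coprime_six`. -/
def sporadicOrders : List ℕ :=
  [0, 4, 8, 9, 10, 12, 14, 15, 16, 18, 22, 26, 27, 30, 34, 36, 38, 39, 40, 42, 46, 50, 58, 66, 70,
    74, 98]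

theorem HasSOLS.fin_of_mem_sporadicOrders : ∀ n ∈ sporadicOrders, HasSOLS (Fin n) := by
  have primePow {p : ℕ} (k : ℕ) (hp : p.Prime) (hk : k ≠ 0) (h4 : 4 ≤ p ^ k) :
      HasSOLS (Fin (p ^ k)) := .fin_of_isPrimePow (hp.isPrimePow.pow hk) h4
  have h8 : HasSOLS (Fin 8) := primePow 3 Nat.prime_two (by norm_num) (by norm_num)
  have h9 : HasSOLS (Fin 9) := primePow 2 Nat.prime_three (by norm_num) (by norm_num)
  have h16 : HasSOLS (Fin 16) := primePow 4 Nat.prime_two (by norm_num) (by norm_num)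
  have h27 : HasSOLS (Fin 27) := primePow 3 Nat.prime_three (by norm_num) (by norm_num)
  have h7 : HasSOLS (Fin 7) := .fin_of_coprime_six (by norm_num)
  have h39 : HasSOLS (Fin 39) := .fin_four_mul_add_of_isPrimePow (q := 8)
    (Nat.prime_two.isPrimePow.pow three_ne_zero) (by norm_num) (by norm_num) h7
  have h74 : HasSOLS (Fin 74) := .fin_four_mul_add_of_isPrimePow (q := 16)
    (Nat.prime_two.isPrimePow.pow four_ne_zero) (by norm_num) (by norm_num) fin_10
  simp only [sporadicOrders, List.forall_mem_cons]
  exact ⟨.of_subsingleton, fin_four, h8, h9, fin_10, fin_12, fin_14, fin_15, h16, fin_18, fin_22,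
    fin_26, h27, fin_30, fin_34, fin_four.fin_mul h9, fin_38, h39, fin_five.fin_mul h8, fin_42,
    fin_46, fin_five.fin_mul fin_10, fin_58, fin_66, h7.fin_mul fin_10, h74, h7.fin_mul fin_14,
    List.forall_mem_nil _⟩

theorem sporadic_or_coprime_or_truncated_of_lt :
    ∀ n < 120, n ∈ [2, 3, 6] ∨ n ∈ sporadicOrders ∨ n.Coprime 6 ∨
      ∃ m ≤ n, m.Coprime 6 ∧ 4 * m ≤ n ∧ n ≤ 5 * m ∧ n - 4 * m ∉ [2, 3, 6] := by
  decide +kernel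

theorem exists_truncated_of_le {n : ℕ} (hn : 120 ≤ n) :
    ∃ m ≤ n, m.Coprime 6 ∧ 4 * m ≤ n ∧ n ≤ 5 * m ∧ n - 4 * m ∉ [2, 3, 6] := by
  -- If `n = 24 a + r`, then `n - 4 m` is `r + 4` for `m = 6 a - 1` and `r + 20` for `m = 6 a - 5`.
  have coprime_one (q : ℕ) : (6 * q + 1).Coprime 6 := by simp
  have coprime_five (q : ℕ) : (6 * q + 5).Coprime 6 := by
    rw [Nat.coprime_mul_left_add_left]
    norm_num
  simp only [List.mem_cons, List.not_mem_nil, or_false]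
  by_cases h : n % 24 = 2
  · exact ⟨_, by omega, coprime_one (n / 24 - 1), by omega, by omega, by omega⟩
  · exact ⟨_, by omega, coprime_five (n / 24 - 1), by omega, by omega, by omega⟩

theorem HasSOLS.fin (n : ℕ) (hn : n ∉ [2, 3, 6]) : HasSOLS (Fin n) := by
  induction n using Nat.strong_induction_on with
  | _ n ih =>
    have of_truncated : (∃ m ≤ n, m.Coprime 6 ∧ 4 * m ≤ n ∧ n ≤ 5 * m ∧ n - 4 * m ∉ [2, 3, 6]) →
        HasSOLS (Fin n) := by
      rintro ⟨m, -, hm, h4, h5, ht⟩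
      have hm0 : m ≠ 0 := by rintro rfl; norm_num at hm
      have hsols := HasSOLS.fin_four_mul_add_of_coprime_six hm (by omega) (ih _ (by omega) ht)
      rwa [Nat.add_sub_cancel' h4] at hsols
    obtain hlarge | hsmall := le_or_gt 120 n
    · exact of_truncated (exists_truncated_of_le hlarge)
    obtain h | h | h | h := sporadic_or_coprime_or_truncated_of_lt n hsmall
    · exact absurd h hn
    · exact .fin_of_mem_sporadicOrders n h
    · exact .fin_of_coprime_six h
    · exact of_truncated h

end Orders

theorem exists_self_orthogonal (n : ℕ) (hn : 0 < n) (h2 : n ≠ 2) (h3 : n ≠ 3) (h6 : n ≠ 6) :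
    ∃ A : Fin n → Fin n → Fin n,
      IsLatinSquare A ∧ IsOrthogonal A (fun i j => A j i) := by
  obtain ⟨A, hA⟩ := HasSOLS.fin n (by simp [h2, h3, h6])
  exact ⟨A, ⟨hA.row, hA.col⟩, fun p => hA.orth.existsUnique p⟩
end

section
/- For any integer n ≥ 2, there do not exist two Latin squares A and B of order n with r(A, B) = n + 1, i.e., no two Latin squares of order n produce exactly n + 1 distinct ordered pairs when superimposed. -/
/-!
A row of a superimposed pair of Latin squares lists the graph of the permutation carrying the
symbols of `A` to those of `B`, so the set of pairs is a union of graphs of permutations of an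
`n`-element set. If these permutations all agree there are exactly `n` pairs; otherwise two of them
differ, and distinct permutations differ in at least two places, so there are at least `n + 2`.
-/

open Function Set

section Graph

variable {ι α β : Type*}

theorem encard_graphOn (s : Set α) (f : α → β) : (s.graphOn f).encard = s.encard := by
  rw [← fst_injOn_graph.encard_image, image_fst_graphOn]

theorem encard_graphOn_union_graphOn (s : Set α) (f g : α → β) :
    (s.graphOn f ∪ s.graphOn g).encard = s.encard + {a ∈ s | f a ≠ g a}.encard := by
  have union_eq : s.graphOn f ∪ s.graphOn g = s.graphOn f ∪ {a ∈ s | f a ≠ g a}.graphOn g := by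
    ext ⟨a, b⟩
    simp only [mem_union, mem_graphOn, mem_ofPred_eq]
    grind
  have disjoint : Disjoint (s.graphOn f) ({a ∈ s | f a ≠ g a}.graphOn g) := by
    rw [Set.disjoint_left]
    rintro ⟨a, b⟩ hf hg
    simp only [mem_graphOn, mem_ofPred_eq] at hf hg
    exact hg.1.2 (hf.2.trans hg.2.symm)
  rw [union_eq, encard_union_eq disjoint, encard_graphOn, encard_graphOn]

theorem nontrivial_setOf_ne {f g : α → β} (hf : Surjective f) (hg : Injective g) (h : f ≠ g) :
    {a | f a ≠ g a}.Nontrivial := by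
  obtain ⟨a, ha⟩ := ne_iff.mp h
  obtain ⟨b, hb⟩ := hf (g a)
  have hab : a ≠ b := by
    rintro rfl
    exact ha hb
  exact ⟨a, ha, b, fun hfg ↦ hab (hg (hb.symm.trans hfg)), hab⟩

theorem card_add_two_le_encard_graphOn_union_graphOn {e f : α ≃ β} (h : e ≠ f) :
    ENat.card α + 2 ≤ (univ.graphOn e ∪ univ.graphOn f).encard := by
  have two_le : 2 ≤ {a | e a ≠ f a}.encard :=
    Order.add_one_le_of_lt <| one_lt_encard_iff_nontrivial.mpr <|
      nontrivial_setOf_ne e.surjective f.injective (DFunLike.coe_injective.ne h)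
  calc
    ENat.card α + 2 ≤ ENat.card α + {a | e a ≠ f a}.encard := by gcongr
    _ = (univ.graphOn e ∪ univ.graphOn f).encard := by simp [encard_graphOn_union_graphOn]

theorem encard_iUnion_graphOn_eq_card_or_card_add_two_le [Nonempty ι] (e : ι → α ≃ β) :
    (⋃ i, univ.graphOn (e i)).encard = ENat.card α ∨
      ENat.card α + 2 ≤ (⋃ i, univ.graphOn (e i)).encard := by
  by_cases h : ∃ i j, e i ≠ e j
  · obtain ⟨i, j, hij⟩ := h
    right
    calc
      ENat.card α + 2 ≤ (univ.graphOn (e i) ∪ univ.graphOn (e j)).encard :=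
        card_add_two_le_encard_graphOn_union_graphOn hij
      _ ≤ (⋃ i, univ.graphOn (e i)).encard :=
        encard_le_encard (union_subset (subset_iUnion_of_subset i le_rfl)
          (subset_iUnion_of_subset j le_rfl))
  · push Not at h
    left
    inhabit ι
    simp only [h _ default, iUnion_const, encard_graphOn, encard_univ]

end Graph

section Superimpose

variable {ι γ α β : Type*} {A : ι → γ → α} {B : ι → γ → β}

theorem exists_range_superimpose_eq_iUnion_graphOn (hA : ∀ i, Bijective (A i))
    (hB : ∀ i, Bijective (B i)) :
    ∃ e : ι → α ≃ β,
      (range fun q : ι × γ ↦ (A q.1 q.2, B q.1 q.2)) = ⋃ i, univ.graphOn (e i) := by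
  have row (i : ι) : ∃ e : α ≃ β, (range fun j ↦ (A i j, B i j)) = univ.graphOn e :=
    exists_equiv_range_eq_graphOn_univ (hA i).surjective (hB i).surjective
      fun _ _ ↦ (hA i).injective.eq_iff.trans (hB i).injective.eq_iff.symm
  choose e he using row
  refine ⟨e, ?_⟩
  simp only [← he]
  ext p
  simp

theorem encard_range_superimpose_eq_card_or_card_add_two_le [Nonempty ι] (hA : ∀ i, Bijective (A i))
    (hB : ∀ i, Bijective (B i)) :
    (range fun q : ι × γ ↦ (A q.1 q.2, B q.1 q.2)).encard = ENat.card γ ∨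
      ENat.card γ + 2 ≤ (range fun q : ι × γ ↦ (A q.1 q.2, B q.1 q.2)).encard := by
  obtain ⟨e, range_eq⟩ := exists_range_superimpose_eq_iUnion_graphOn hA hB
  rw [range_eq, ENat.card_congr (.ofBijective _ (hA (Classical.arbitrary ι)))]
  exact encard_iUnion_graphOn_eq_card_or_card_add_two_le e

theorem no_n_add_one_orthogonal_general [Finite γ] (hA : ∀ i, Bijective (A i))
    (hB : ∀ i, Bijective (B i)) :
    (range fun q : ι × γ ↦ (A q.1 q.2, B q.1 q.2)).encard ≠ ENat.card γ + 1 := by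
  intro h
  cases isEmpty_or_nonempty ι with
  | inl _ => simp [range_eq_empty, eq_comm (a := (0 : ℕ∞))] at h
  | inr _ =>
    have dichotomy := encard_range_superimpose_eq_card_or_card_add_two_le hA hB
    rw [h, ENat.card_eq_coe_natCard] at dichotomy
    norm_cast at dichotomy
    omega

end Superimpose

theorem coe_orthCount {k n : ℕ} (A B : Fin k → Fin n → Fin n) :
    (orthCount A B : ℕ∞) = (range fun q : Fin k × Fin n ↦ (A q.1 q.2, B q.1 q.2)).encard := by
  rw [orthCount, ← encard_coe_eq_coe_finsetCard, Finset.coe_image, Finset.coe_univ, image_univ]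

theorem no_n_add_one_orthogonal (n : ℕ) (hn : 2 ≤ n) :
    ¬ ∃ A B : Fin n → Fin n → Fin n,
        IsLatinSquare A ∧ IsLatinSquare B ∧ orthCount A B = n + 1 := by
  rintro ⟨A, B, hA, hB, h⟩
  exact no_n_add_one_orthogonal_general hA.1 hB.1 (by simp [← coe_orthCount, h])
end
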